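/- For every integer n ≥ 2, (p(n)^{1/n} / p(n+1)^{1/(n+1)}) · (1 + 3π/(√24 · n^{5/2})) > p(n-1)^{1/(n-1)} / p(n)^{1/n}. -/

import Mathlib

open Real

/-- The partition function, as a real number. -/
noncomputable def p (n : ℕ) : ℝ := (Fintype.card (Nat.Partition n) : ℝ)

open scoped PowerSeries.WithPiTopology in
open PowerSeries in
theorem mk_card_partition_mul_pentagonalSeries :
    (PowerSeries.mk fun n ↦ (Fintype.card (Nat.Partition n) : ℤ)) * pentagonalSeries ℤ = 1 := by
  let _ : TopologicalSpace ℤ := ⊥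
  have _ : DiscreteTopology ℤ := ⟨rfl⟩
  have h := (Nat.Partition.hasProd_powerSeriesMk_card_restricted ℤ (fun _ ↦ True)).mul
    (PowerSeries.WithPiTopology.hasProd_one_sub_X_pow ℤ)
  have e : (fun n ↦ (Fintype.card (Nat.Partition n) : ℤ)) =
      fun n ↦ ((Nat.Partition.restricted n (fun _ ↦ True)).card : ℤ) := by
    funext n
    simp [Nat.Partition.restricted]
  rw [e]
  refine h.unique ?_
  convert hasProd_one with i
  simp only [if_true, pow_mul]
  apply PowerSeries.WithPiTopology.tsum_pow_mul_one_sub_of_constantCoeff_eq_zero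
  simp

open scoped PowerSeries.WithPiTopology in
open PowerSeries in
theorem coeff_pentagonalSeries_eq_sum {K n : ℕ} (h : n < K * (3 * K + 1) / 2) :
    (pentagonalSeries ℤ).coeff n =
      ∑ k ∈ Finset.range K, (-1) ^ k * ((if n = k * (3 * k + 1) / 2 then 1 else 0) -
        (if n = (k + 1) * (3 * k + 2) / 2 then 1 else 0)) := by
  let _ : TopologicalSpace ℤ := ⊥
  have _ : DiscreteTopology ℤ := ⟨rfl⟩
  have h1 := (PowerSeries.WithPiTopology.hasSum_pow_pentagonal_sub_pentagonalSeries ℤ).map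
    (PowerSeries.coeff n) (PowerSeries.WithPiTopology.continuous_coeff ℤ n)
  have e (k : ℕ) : (PowerSeries.coeff n) ((-1 : ℤ⟦X⟧) ^ k * (X ^ pentagonal (-k) -
      X ^ pentagonal (k + 1))) = (-1) ^ k * ((if n = k * (3 * k + 1) / 2 then 1 else 0) -
        (if n = (k + 1) * (3 * k + 2) / 2 then 1 else 0)) := by
    have e1 : pentagonal (-k) = k * (3 * k + 1) / 2 := by
      rw [pentagonal_neg]; norm_cast
    have e2 : pentagonal (k + 1) = (k + 1) * (3 * k + 2) / 2 := by
      rw [pentagonal_def]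
      have : ((k : ℤ) + 1) * (3 * (k + 1) - 1) / 2 = (((k + 1) * (3 * k + 2) / 2 : ℕ) : ℤ) := by
        push_cast; congr 2; ring
      rw [this, Int.toNat_natCast]
    have e3 : ((-1 : ℤ⟦X⟧) ^ k) = C ((-1 : ℤ) ^ k) := by simp
    rw [e1, e2, e3, coeff_C_mul, map_sub, coeff_X_pow, coeff_X_pow]
  refine h1.unique ?_
  convert hasSum_sum_of_ne_finset_zero (s := Finset.range K)
    (L := SummationFilter.unconditional ℕ) ?_ using 1
  · refine Finset.sum_congr rfl fun k _ ↦ (e k).symm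
  · intro k hk
    simp only [Finset.mem_range, not_lt] at hk
    simp only [Function.comp]
    rw [e]
    have h2 : K * (3 * K + 1) / 2 ≤ k * (3 * k + 1) / 2 := by gcongr
    have h3 : k * (3 * k + 1) / 2 ≤ (k + 1) * (3 * k + 2) / 2 := by gcongr <;> omega
    rw [if_neg (by omega), if_neg (by omega)]
    simp

/-- Positive terms of the pentagonal number series at `x`, truncated to the first `K` pairs. -/
def eulerPos (x : ℕ) : ℕ → ℕ
  | 0 => 0
  | k + 1 => eulerPos x k +
      cond (Nat.beq (k % 2) 0) (x.pow (k * (3 * k + 1) / 2)) (x.pow ((k + 1) * (3 * k + 2) / 2))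

/-- Absolute values of the negative terms of the pentagonal number series at `x`, truncated to the
first `K` pairs. -/
def eulerNeg (x : ℕ) : ℕ → ℕ
  | 0 => 0
  | k + 1 => eulerNeg x k +
      cond (Nat.beq (k % 2) 0) (x.pow ((k + 1) * (3 * k + 2) / 2)) (x.pow (k * (3 * k + 1) / 2))

theorem eulerPos_sub_eulerNeg (x K : ℕ) :
    (eulerPos x K : ℤ) - eulerNeg x K = ∑ k ∈ Finset.range K,
      (-1) ^ k * ((x : ℤ) ^ (k * (3 * k + 1) / 2) - (x : ℤ) ^ ((k + 1) * (3 * k + 2) / 2)) := by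
  induction K with
  | zero => simp [eulerPos, eulerNeg]
  | succ k ih =>
    rw [Finset.sum_range_succ, ← ih, eulerPos, eulerNeg]
    have h : ∀ e : ℕ, x.pow e = x ^ e := fun _ ↦ rfl
    rcases Nat.mod_two_eq_zero_or_one k with hk | hk
    · rw [hk, (Nat.even_iff.2 hk).neg_one_pow]
      have : Nat.beq 0 0 = true := rfl
      simp only [this, cond_true, h]
      push_cast
      ring
    · rw [hk, (Nat.odd_iff.2 hk).neg_one_pow]
      have : Nat.beq 1 0 = false := rfl
      simp only [this, cond_false, h]
      push_cast
      ring

open Polynomial in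
theorem pow_dvd_sum_card_partition_mul_sub_one (x : ℕ) {M K : ℕ} (h : M ≤ K * (3 * K + 1) / 2) :
    (x : ℤ) ^ M ∣ (∑ n ∈ Finset.range M, (Fintype.card (Nat.Partition n) : ℤ) * (x : ℤ) ^ n) *
      ((eulerPos x K : ℤ) - eulerNeg x K) - 1 := by
  set q : ℤ[X] := ∑ n ∈ Finset.range M, C (Fintype.card (Nat.Partition n) : ℤ) * X ^ n with hq
  set e : ℤ[X] := ∑ k ∈ Finset.range K,
      (-1) ^ k * (X ^ (k * (3 * k + 1) / 2) - X ^ ((k + 1) * (3 * k + 2) / 2)) with he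
  have hdvd : X ^ M ∣ q * e - 1 := by
    rw [X_pow_dvd_iff]
    intro d hd
    have h1 := congrArg (PowerSeries.coeff d) mk_card_partition_mul_pentagonalSeries
    rw [PowerSeries.coeff_mul, PowerSeries.coeff_one] at h1
    rw [coeff_sub, coeff_mul, coeff_one, sub_eq_zero]
    rw [← h1]
    refine Finset.sum_congr rfl fun ij hij ↦ ?_
    have hij' := Finset.HasAntidiagonal.mem_antidiagonal.1 hij
    congr 1
    · rw [hq, finsetSum_coeff, PowerSeries.coeff_mk]
      simp only [coeff_C_mul_X_pow]
      rw [Finset.sum_ite_eq, if_pos (by simp; omega)]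
    · rw [coeff_pentagonalSeries_eq_sum (K := K) (by omega), he, finsetSum_coeff]
      refine Finset.sum_congr rfl fun k _ ↦ ?_
      have e3 : ((-1 : ℤ[X]) ^ k) = C ((-1 : ℤ) ^ k) := by simp
      rw [e3, coeff_C_mul, coeff_sub, coeff_X_pow, coeff_X_pow]
  have := _root_.map_dvd (evalRingHom (x : ℤ)) hdvd
  simp only [coe_evalRingHom, eval_pow, eval_X, eval_sub, eval_mul, eval_one, hq, he,
    eval_finsetSum, eval_C, eval_neg] at this
  rw [eulerPos_sub_eulerNeg]
  exact this

theorem eq_sum_card_partition_of_mod_eq {x M K V : ℕ} (h : M ≤ K * (3 * K + 1) / 2)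
    (hV : V < x ^ M) (hp : ∀ n < M, Fintype.card (Nat.Partition n) < x)
    (hmod : V * eulerPos x K % x ^ M = (1 + V * eulerNeg x K) % x ^ M) :
    V = ∑ n ∈ Finset.range M, Fintype.card (Nat.Partition n) * x ^ n := by
  set P := ∑ n ∈ Finset.range M, Fintype.card (Nat.Partition n) * x ^ n with hP
  have hPlt : P < x ^ M := by
    rw [hP]
    clear hmod hV h hP
    induction M with
    | zero => simp
    | succ M ih =>
      rw [Finset.sum_range_succ]
      have := ih (fun n hn ↦ hp n (by omega))
      have h2 := Nat.mul_le_mul_right (x ^ M) (Nat.succ_le_of_lt (hp M (by omega)))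
      rw [pow_succ]
      nlinarith
  have h1 := pow_dvd_sum_card_partition_mul_sub_one x h
  have h2 : (x : ℤ) ^ M ∣ V * ((eulerPos x K : ℤ) - eulerNeg x K) - 1 := by
    have := (Nat.modEq_iff_dvd.1 (show Nat.ModEq (x ^ M) _ _ from hmod.symm))
    push_cast at this
    convert this using 1
    ring
  have h3 : (x : ℤ) ^ M ∣ (V : ℤ) - P := by
    have e : (V : ℤ) - P =
        V * (-((∑ n ∈ Finset.range M, (Fintype.card (Nat.Partition n) : ℤ) * (x : ℤ) ^ n) *
          ((eulerPos x K : ℤ) - eulerNeg x K) - 1)) +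
        (∑ n ∈ Finset.range M, (Fintype.card (Nat.Partition n) : ℤ) * (x : ℤ) ^ n) *
          (V * ((eulerPos x K : ℤ) - eulerNeg x K) - 1) := by
      rw [hP]; push_cast; ring
    rw [e]
    exact dvd_add (Dvd.dvd.mul_left ((dvd_neg).2 h1) _) (Dvd.dvd.mul_left h2 _)
  have h4 : P ≡ V [MOD x ^ M] := by
    rw [Nat.modEq_iff_dvd]; exact_mod_cast h3
  exact (Nat.ModEq.eq_of_lt_of_lt h4 hPlt hV).symm

/-- Newton iteration for the inverse of `e` modulo `x ^ (2 ^ k + 3)`; only its value is used, never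
a property of it. -/
def newtonInverse (x e : ℕ) : ℕ → ℕ
  | 0 => 1 + x + 2 * x.pow 2 + 3 * x.pow 3
  | k + 1 =>
    let v := newtonInverse x e k
    let m := x.pow (Nat.pow 2 (k + 1) + 3)
    v * (m + 2 - v * (e % m) % m) % m

/-- Applies `f` to the evaluated numeral `v`, so that kernel reduction shares its value. -/
def forceNat (v : ℕ) (f : ℕ → Bool) : Bool := Nat.casesOn v (f 0) (fun k ↦ f (k + 1))

theorem forceNat_eq (v : ℕ) (f : ℕ → Bool) : forceNat v f = f v := by cases v <;> rfl

/-- The binary logarithm of a number below `2 ^ 2 ^ j`, by bisection. -/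
def bisectLog : ℕ → ℕ → ℕ
  | 0, _ => 0
  | j + 1, v => cond (Nat.ble (Nat.pow 2 (Nat.pow 2 j)) v)
      (Nat.pow 2 j + bisectLog j (v / Nat.pow 2 (Nat.pow 2 j))) (bisectLog j v)

theorem lt_two_pow_bisectLog {j v : ℕ} (h : v < 2 ^ 2 ^ j) : v < 2 ^ (bisectLog j v + 1) := by
  induction j generalizing v with
  | zero => simpa [bisectLog] using h
  | succ j ih =>
    have h2 : ∀ a b : ℕ, a.pow b = a ^ b := fun _ _ ↦ rfl
    simp only [bisectLog, h2]
    by_cases hv : 2 ^ 2 ^ j ≤ v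
    · rw [Nat.ble_eq_true_of_le hv, cond_true]
      have h3 : v / 2 ^ 2 ^ j < 2 ^ 2 ^ j := by
        rw [Nat.div_lt_iff_lt_mul (by positivity), ← pow_add, ← two_mul, ← pow_succ']
        exact h
      have h4 := ih h3
      rw [Nat.div_lt_iff_lt_mul (by positivity), ← pow_add] at h4
      convert h4 using 2
      ring
    · have : Nat.ble (2 ^ 2 ^ j) v = false := by
        rw [← Bool.not_eq_true, Nat.ble_eq]; exact hv
      rw [this, cond_false]
      exact ih (by omega)

/-- The integer inequality tested at `n`, for `a = p (n - 1)`, `b = p n`, `c = p (n + 1)`,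
`b ^ 16 < 2 ^ k`, and an approximation `g` to `2 √n`. -/
def ratioTest (n a b c k g : ℕ) : Bool :=
  Nat.blt (k * 866434 * n.pow 2 * b.pow 2 * ((c + a) * (g.pow 2 + 4 * n)) +
      10000000 * n.pow 4 * (c * a) * ((c + a) * (g.pow 2 + 4 * n)) +
      20000000 * n.pow 3 * a * b.pow 2 * (g.pow 2 + 4 * n) +
      32704600 * (4 * g * n) * b.pow 2 * (c + a))
    (10000000 * n.pow 4 * b.pow 2 * ((c + a) * (g.pow 2 + 4 * n)) +
      20000000 * n.pow 3 * c * b.pow 2 * (g.pow 2 + 4 * n) +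
      19238000 * (4 * g * n) * n.pow 2 * b.pow 2 * (c + a))

/-- Reads three base `x` digits from `V` and tests the inequality at `n`. -/
def leafTest (x n V : ℕ) : Bool :=
  forceNat (V % x) fun a ↦ forceNat (V / x % x) fun b ↦ forceNat (V / x / x) fun c ↦
  forceNat (bisectLog 13 (b.pow 16) + 1) fun k ↦
  forceNat (3 * Nat.pow 2 (bisectLog 4 n / 2)) fun g ↦ ratioTest n a b c k g

/-- Tests the inequality at `n, …, n + 2 ^ j - 1`, reading `2 ^ j + 2` base `x` digits of `V`. -/
def rangeTest (x : ℕ) : ℕ → ℕ → ℕ → Bool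
  | 0, n, V => leafTest x n V
  | j + 1, n, V =>
    cond (forceNat (V % x.pow (Nat.pow 2 j + 2)) (fun V₁ ↦ rangeTest x j n V₁))
      (forceNat (V / x.pow (Nat.pow 2 j)) (fun V₂ ↦
        forceNat (n + Nat.pow 2 j) (fun n₂ ↦ rangeTest x j n₂ V₂))) false

/-- Computes the partition numbers up to `2 ^ j + 2` as the base `2 ^ B` digits of one number,
certifies them by the pentagonal number theorem and tests the inequality on `2, …, 2 ^ j + 1`. -/
def partitionTest (j B K : ℕ) : Bool :=
  let x := Nat.pow 2 B
  let m := x.pow (Nat.pow 2 j + 3)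
  let ep := eulerPos x K
  let en := eulerNeg x K
  forceNat (newtonInverse x ((ep + m - en % m) % m) j) fun V ↦
    cond (Nat.beq (V * ep % m) ((1 + V * en) % m)) (cond (Nat.blt V m)
      (forceNat (V / x) (fun V ↦ rangeTest x j 2 V)) false) false

theorem partitionTest_thirteen : partitionTest 13 340 75 = true := by decide +kernel

theorem sum_mul_pow_lt_pow {x : ℕ} {d : ℕ → ℕ} (hd : ∀ i, d i < x) (a : ℕ) :
    ∑ i ∈ Finset.range a, d i * x ^ i < x ^ a := by
  induction a with
  | zero => simp
  | succ a ih =>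
    rw [Finset.sum_range_succ, pow_succ]
    have := Nat.mul_le_mul_right (x ^ a) (Nat.succ_le_of_lt (hd a))
    nlinarith

theorem sum_range_add_mul_pow (x : ℕ) (d : ℕ → ℕ) (a b : ℕ) :
    ∑ i ∈ Finset.range (a + b), d i * x ^ i = ∑ i ∈ Finset.range a, d i * x ^ i +
      x ^ a * ∑ i ∈ Finset.range b, d (a + i) * x ^ i := by
  rw [Finset.sum_range_add, Finset.mul_sum]
  congr 1
  refine Finset.sum_congr rfl fun i _ ↦ ?_
  rw [pow_add]; ring

theorem sum_range_add_mul_pow_mod {x : ℕ} {d : ℕ → ℕ} (hd : ∀ i, d i < x) (a b : ℕ) :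
    (∑ i ∈ Finset.range (a + b), d i * x ^ i) % x ^ a = ∑ i ∈ Finset.range a, d i * x ^ i := by
  rw [sum_range_add_mul_pow, Nat.add_mul_mod_self_left,
    Nat.mod_eq_of_lt (sum_mul_pow_lt_pow hd a)]

theorem sum_range_add_mul_pow_div {x : ℕ} {d : ℕ → ℕ} (hd : ∀ i, d i < x) (a b : ℕ) :
    (∑ i ∈ Finset.range (a + b), d i * x ^ i) / x ^ a =
      ∑ i ∈ Finset.range b, d (a + i) * x ^ i := by
  have hx : 0 < x := by have := hd 0; omega
  rw [sum_range_add_mul_pow, Nat.add_mul_div_left _ _ (by positivity),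
    Nat.div_eq_of_lt (sum_mul_pow_lt_pow hd a), zero_add]

theorem exists_ratioTest_of_leafTest {x n : ℕ} {d : ℕ → ℕ} (hd : ∀ i, d i < x)
    (hx : x ^ 16 ≤ 2 ^ 2 ^ 13)
    (h : leafTest x n (∑ i ∈ Finset.range 3, d i * x ^ i) = true) :
    ∃ k g, d 1 ^ 16 < 2 ^ k ∧ 0 < g ∧ ratioTest n (d 0) (d 1) (d 2) k g = true := by
  have e0 := sum_range_add_mul_pow_mod hd 1 2
  have e1 := sum_range_add_mul_pow_div hd 1 2
  have hd' : ∀ i, d (1 + i) < x := fun i ↦ hd _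
  have e2 := sum_range_add_mul_pow_mod hd' 1 1
  have e3 := sum_range_add_mul_pow_div hd' 1 1
  simp only [Nat.reduceAdd, pow_one, Finset.sum_range_one, pow_zero, mul_one,
    add_zero] at e0 e1 e2 e3
  simp only [leafTest, forceNat_eq, e0, e1, e2, e3] at h
  refine ⟨_, _, ?_, ?_, h⟩
  · exact lt_two_pow_bisectLog (lt_of_lt_of_le (Nat.pow_lt_pow_left (hd 1) (by norm_num)) hx)
  · exact Nat.mul_pos (by norm_num) (Nat.pow_pos (by norm_num))

theorem exists_ratioTest_of_rangeTest {x j n : ℕ} {d : ℕ → ℕ} (hd : ∀ i, d i < x)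
    (hx : x ^ 16 ≤ 2 ^ 2 ^ 13)
    (h : rangeTest x j n (∑ i ∈ Finset.range (2 ^ j + 2), d i * x ^ i) = true) {i : ℕ}
    (hi : i < 2 ^ j) : ∃ k g, d (i + 1) ^ 16 < 2 ^ k ∧ 0 < g ∧
      ratioTest (n + i) (d i) (d (i + 1)) (d (i + 2)) k g = true := by
  induction j generalizing n d i with
  | zero =>
    obtain rfl : i = 0 := by simpa using hi
    exact exists_ratioTest_of_leafTest hd hx h
  | succ j ih =>
    have h2 : ∀ a b : ℕ, a.pow b = a ^ b := fun _ _ ↦ rfl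
    simp only [rangeTest, forceNat_eq, h2, Bool.cond_false_right, Bool.and_eq_true] at h
    have e : 2 ^ (j + 1) = 2 ^ j + 2 ^ j := by ring
    obtain ⟨h3, h4⟩ := h
    rw [show 2 ^ (j + 1) + 2 = (2 ^ j + 2) + 2 ^ j by omega, sum_range_add_mul_pow_mod hd] at h3
    rw [show 2 ^ (j + 1) + 2 = 2 ^ j + (2 ^ j + 2) by omega, sum_range_add_mul_pow_div hd] at h4
    by_cases hij : i < 2 ^ j
    · exact ih hd h3 hij
    · obtain ⟨k, g, hk⟩ := ih (d := fun i ↦ d (2 ^ j + i)) (fun i ↦ hd _) h4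
        (i := i - 2 ^ j) (by omega)
      refine ⟨k, g, ?_⟩
      simp only [show 2 ^ j + (i - 2 ^ j + 1) = i + 1 by omega,
        show 2 ^ j + (i - 2 ^ j) = i by omega,
        show 2 ^ j + (i - 2 ^ j + 2) = i + 2 by omega,
        show n + 2 ^ j + (i - 2 ^ j) = n + i by omega] at hk
      exact hk

theorem exists_ratioTest_of_partitionTest {j B K : ℕ} (h : partitionTest j B K = true)
    (hK : 2 ^ j + 3 ≤ K * (3 * K + 1) / 2) (hB : B ≤ 512)
    (hp : ∀ n < 2 ^ j + 3, Fintype.card (Nat.Partition n) < 2 ^ B) {n : ℕ} (hn : 2 ≤ n)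
    (hn' : n < 2 ^ j + 2) : ∃ k g, Fintype.card (Nat.Partition n) ^ 16 < 2 ^ k ∧ 0 < g ∧
      ratioTest n (Fintype.card (Nat.Partition (n - 1))) (Fintype.card (Nat.Partition n))
        (Fintype.card (Nat.Partition (n + 1))) k g = true := by
  have h2 : ∀ a b : ℕ, a.pow b = a ^ b := fun _ _ ↦ rfl
  simp only [partitionTest, forceNat_eq, h2, Bool.cond_false_right, Bool.and_eq_true] at h
  obtain ⟨h3, h4, h5⟩ := h
  have e := eq_sum_card_partition_of_mod_eq hK (Nat.le_of_ble_eq_true h4) hp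
    (Nat.eq_of_beq_eq_true h3)
  rw [e] at h5
  set d : ℕ → ℕ := fun n ↦ if n < 2 ^ j + 3 then Fintype.card (Nat.Partition n) else 0 with hdef
  have hd : ∀ i, d i < 2 ^ B := by
    intro i
    simp only [hdef]
    split_ifs with hi
    · exact hp i hi
    · positivity
  have e2 : ∑ n ∈ Finset.range (2 ^ j + 3), Fintype.card (Nat.Partition n) * (2 ^ B) ^ n =
      ∑ n ∈ Finset.range (1 + (2 ^ j + 2)), d n * (2 ^ B) ^ n := by
    rw [show 1 + (2 ^ j + 2) = 2 ^ j + 3 by omega]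
    refine Finset.sum_congr rfl fun i hi ↦ ?_
    simp only [hdef, if_pos (Finset.mem_range.1 hi)]
  rw [e2] at h5
  have e3 := sum_range_add_mul_pow_div hd 1 (2 ^ j + 2)
  rw [pow_one] at e3
  rw [e3] at h5
  have hx : (2 ^ B) ^ 16 ≤ 2 ^ 2 ^ 13 := by
    rw [← pow_mul]
    exact Nat.pow_le_pow_right (by norm_num) (by omega)
  obtain ⟨k, g, h6, h7, h8⟩ := exists_ratioTest_of_rangeTest (d := fun i ↦ d (1 + i))
    (fun i ↦ hd _) hx h5 (i := n - 2) (by omega)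
  simp only [hdef] at h6 h8
  rw [if_pos (by omega), show 1 + (n - 2 + 1) = n by omega] at h6
  rw [if_pos (by omega), if_pos (by omega), if_pos (by omega), show 1 + (n - 2 + 1) = n by omega,
    show 1 + (n - 2) = n - 1 by omega, show 1 + (n - 2 + 2) = n + 1 by omega,
    show 2 + (n - 2) = n by omega] at h8
  exact ⟨k, g, h6, h7, h8⟩

theorem p_pos (n : ℕ) : 0 < p n := by
  unfold p
  exact_mod_cast Fintype.card_pos

/-- The left side of the main inequality after taking logarithms, as a function of `n`. -/
noncomputable def logDefect (n : ℕ) : ℝ :=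
  2 * log (p n) + (n : ℝ) ^ 2 * (log (p (n + 1)) + log (p (n - 1)) - 2 * log (p n)) -
    n * (log (p (n + 1)) - log (p (n - 1)))

theorem nth_root_ratio_of_logDefect_lt {n : ℕ} (hn : 2 ≤ n)
    (h : logDefect n < ((n : ℝ) ^ 3 - n) *
      log (1 + 3 * π / (Real.sqrt 24 * (n : ℝ) ^ ((5 : ℝ) / 2)))) :
    p n ^ ((1 : ℝ) / (n : ℝ)) / p (n + 1) ^ ((1 : ℝ) / ((n : ℝ) + 1)) *
        (1 + 3 * π / (Real.sqrt 24 * (n : ℝ) ^ ((5 : ℝ) / 2))) >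
      p (n - 1) ^ ((1 : ℝ) / ((n : ℝ) - 1)) / p n ^ ((1 : ℝ) / (n : ℝ)) := by
  have hn' : (2 : ℝ) ≤ n := by exact_mod_cast hn
  set z := 1 + 3 * π / (Real.sqrt 24 * (n : ℝ) ^ ((5 : ℝ) / 2)) with hz
  have hz0 : 0 < z := by positivity
  have h0 := p_pos n
  have h1 := p_pos (n + 1)
  have h2 := p_pos (n - 1)
  rw [gt_iff_lt, ← Real.log_lt_log_iff (by positivity) (by positivity),
    Real.log_mul (by positivity) (by positivity), Real.log_div (by positivity) (by positivity),
    Real.log_div (by positivity) (by positivity), Real.log_rpow h0, Real.log_rpow h1,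
    Real.log_rpow h2]
  unfold logDefect at h
  have hpos : (0 : ℝ) < n * ((n : ℝ) - 1) * (n + 1) := by
    have : (0 : ℝ) < (n : ℝ) - 1 := by linarith
    positivity
  have hne : (n : ℝ) - 1 ≠ 0 := by linarith
  have key : (1 / (n : ℝ) * log (p n) - 1 / ((n : ℝ) + 1) * log (p (n + 1)) + log z -
      (1 / ((n : ℝ) - 1) * log (p (n - 1)) - 1 / (n : ℝ) * log (p n))) *
      (n * ((n : ℝ) - 1) * (n + 1)) = ((n : ℝ) ^ 3 - n) * log z -
      (2 * log (p n) + (n : ℝ) ^ 2 * (log (p (n + 1)) + log (p (n - 1)) - 2 * log (p n)) -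
    n * (log (p (n + 1)) - log (p (n - 1)))) := by
    field_simp
    ring
  have := pos_of_mul_pos_left (a := _) (b := _) (by rw [key]; linarith) hpos.le
  linarith

theorem mul_sqrt_le_mul_log {n : ℕ} (hn : 2 ≤ n) :
    3 * π / Real.sqrt 24 * √n * (1 - 1.7 / (n : ℝ) ^ 2) ≤ ((n : ℝ) ^ 3 - n) *
      log (1 + 3 * π / (Real.sqrt 24 * (n : ℝ) ^ ((5 : ℝ) / 2))) := by
  have hn' : (2 : ℝ) ≤ n := by exact_mod_cast hn
  set N := (n : ℝ) with hN
  set s := √N with hs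
  have hs2 : s ^ 2 = N := Real.sq_sqrt (by linarith)
  have hs0 : 0 < s := Real.sqrt_pos.2 (by linarith)
  have h52 : N ^ ((5 : ℝ) / 2) = s * N ^ 2 := by
    rw [show (5 : ℝ) / 2 = 1 / 2 + 2 by norm_num, Real.rpow_add (by linarith), ← Real.sqrt_eq_rpow]
    norm_num [hs]
  set γ := 3 * π / Real.sqrt 24 with hγ
  have hγ0 : 0 < γ := by positivity
  have hγ2 : γ ≤ 1.9244 := by
    have h24 : (4.8985 : ℝ) ≤ Real.sqrt 24 := Real.le_sqrt_of_sq_le (by norm_num)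
    rw [hγ, div_le_iff₀ (by positivity)]
    nlinarith [Real.pi_lt_d4]
  rw [h52, show 3 * π / (Real.sqrt 24 * (s * N ^ 2)) = γ / (s * N ^ 2) by rw [hγ]; field_simp]
  set z := γ / (s * N ^ 2) with hz
  have hz0 : 0 < z := by positivity
  have hlog : z - z ^ 2 / 2 ≤ log (1 + z) := by
    have := Real.le_log_one_add_of_nonneg hz0.le
    refine le_trans ?_ this
    rw [le_div_iff₀ (by positivity)]
    nlinarith [pow_pos hz0 3]
  have hs1 : (1.414 : ℝ) ≤ s := Real.le_sqrt_of_sq_le (by linarith)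
  have hzle : z * N ^ 2 ≤ 1.361 := by
    rw [hz, show γ / (s * N ^ 2) * N ^ 2 = γ / s by field_simp, div_le_iff₀ hs0]
    nlinarith
  have hN3 : 0 ≤ N ^ 3 - N := by nlinarith [sq_nonneg (N - 1)]
  refine le_trans ?_ (mul_le_mul_of_nonneg_left hlog hN3)
  have e1 : γ * s = N ^ 3 * z := by
    rw [hz]; field_simp; rw [hs2]
  rw [e1]
  have e2 : (N ^ 3 - N) * (z - z ^ 2 / 2) - N ^ 3 * z * (1 - 1.7 / N ^ 2) =
      N * z * (1.7 - (1 - 1 / N ^ 2) * (z * N ^ 2) / 2 - 1) := by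
    field_simp
    ring
  have h4 : 0 ≤ 1 / N ^ 2 := by positivity
  have : 0 ≤ N * z * (1.7 - (1 - 1 / N ^ 2) * (z * N ^ 2) / 2 - 1) := by
    have h3 : 0 < z * N ^ 2 := by positivity
    have : 0 ≤ 1.7 - (1 - 1 / N ^ 2) * (z * N ^ 2) / 2 - 1 := by nlinarith
    positivity
  linarith

theorem four_mul_div_le_sqrt {G N : ℝ} (hG : 0 < G) (hN : 0 < N) :
    4 * G * N / (G ^ 2 + 4 * N) ≤ √N := by
  rw [div_le_iff₀ (by positivity)]
  obtain ⟨s, hs, rfl⟩ : ∃ s : ℝ, 0 < s ∧ N = s ^ 2 :=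
    ⟨√N, Real.sqrt_pos.2 hN, (Real.sq_sqrt hN.le).symm⟩
  rw [Real.sqrt_sq hs.le]
  nlinarith [mul_nonneg hs.le (sq_nonneg (G - 2 * s))]

theorem lt_of_cleared_denominators {a b c G N k : ℝ} (ha : 0 < a) (hb : 0 < b) (hc : 0 < c)
    (hN : 0 < N) (hG : 0 < G)
    (h : k * 866434 * N ^ 2 * b ^ 2 * ((c + a) * (G ^ 2 + 4 * N)) +
        10000000 * N ^ 4 * (c * a) * ((c + a) * (G ^ 2 + 4 * N)) +
        20000000 * N ^ 3 * a * b ^ 2 * (G ^ 2 + 4 * N) +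
        32704600 * (4 * G * N) * b ^ 2 * (c + a) <
      10000000 * N ^ 4 * b ^ 2 * ((c + a) * (G ^ 2 + 4 * N)) +
        20000000 * N ^ 3 * c * b ^ 2 * (G ^ 2 + 4 * N) +
        19238000 * (4 * G * N) * N ^ 2 * b ^ 2 * (c + a)) :
    k * 0.0866434 + N ^ 2 * (c * a / b ^ 2 - 1) - N * (2 * (c - a) / (c + a)) <
      1.9238 * (4 * G * N / (G ^ 2 + 4 * N)) * (1 - 1.7 / N ^ 2) := by
  rw [← sub_pos]
  have hD : 0 < 10000000 * N ^ 2 * b ^ 2 * ((c + a) * (G ^ 2 + 4 * N)) := by positivity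
  refine pos_of_mul_pos_left (b := 10000000 * N ^ 2 * b ^ 2 * ((c + a) * (G ^ 2 + 4 * N))) ?_ hD.le
  rw [← sub_pos] at h
  refine lt_of_lt_of_eq h ?_
  have h1 : c + a ≠ 0 := by positivity
  have h2 : G ^ 2 + 4 * N ≠ 0 := by positivity
  field_simp
  ring

theorem logDefect_lt_of_ratioTest {n k g : ℕ} (hn : 2 ≤ n)
    (hk : Fintype.card (Nat.Partition n) ^ 16 < 2 ^ k) (hg : 0 < g)
    (hle : Fintype.card (Nat.Partition (n - 1)) ≤ Fintype.card (Nat.Partition (n + 1)))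
    (h : ratioTest n (Fintype.card (Nat.Partition (n - 1))) (Fintype.card (Nat.Partition n))
        (Fintype.card (Nat.Partition (n + 1))) k g = true) :
    logDefect n < ((n : ℝ) ^ 3 - n) *
      log (1 + 3 * π / (Real.sqrt 24 * (n : ℝ) ^ ((5 : ℝ) / 2))) := by
  refine lt_of_lt_of_le ?_ (mul_sqrt_le_mul_log hn)
  have hn' : (2 : ℝ) ≤ n := by exact_mod_cast hn
  have ha := p_pos (n - 1)
  have hb := p_pos n
  have hc := p_pos (n + 1)
  have hac : p (n - 1) ≤ p (n + 1) := by unfold p; exact_mod_cast hle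
  have hlogb : 2 * log (p n) ≤ k * 0.0866434 := by
    have h1 : p n ^ 16 < 2 ^ k := by unfold p; exact_mod_cast hk
    have h2 := Real.log_lt_log (by positivity) h1
    rw [Real.log_pow, Real.log_pow] at h2
    push_cast at h2
    have h3 : (0 : ℝ) ≤ k := by positivity
    nlinarith [Real.log_two_lt_d9]
  have h' := Nat.le_of_ble_eq_true h
  have h2 : ∀ a b : ℕ, a.pow b = a ^ b := fun _ _ ↦ rfl
  simp only [h2] at h'
  have h'' := (Nat.cast_lt (α := ℝ)).2 (Nat.lt_of_succ_le h')
  push_cast at h''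
  change _ at h''
  simp only [← p.eq_1] at h''
  clear h h' hk hle
  unfold logDefect
  set a := p (n - 1)
  set b := p n
  set c := p (n + 1)
  set N := (n : ℝ)
  have hg' : (0 : ℝ) < g := by exact_mod_cast hg
  set G := (g : ℝ)
  have hN0 : 0 < N := by linarith
  have hl1 : log c + log a - 2 * log b ≤ c * a / b ^ 2 - 1 := by
    have := Real.log_le_sub_one_of_pos (show 0 < c * a / b ^ 2 by positivity)
    rw [Real.log_div (by positivity) (by positivity), Real.log_mul hc.ne' ha.ne',
      Real.log_pow] at this
    exact_mod_cast this
  have hl2 : 2 * (c - a) / (c + a) ≤ log c - log a := by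
    have := Real.le_log_one_add_of_nonneg (x := (c - a) / a) (div_nonneg (by linarith) ha.le)
    rw [show 1 + (c - a) / a = c / a by field_simp; ring, Real.log_div hc.ne' ha.ne'] at this
    have e : (c - a) / a + 2 = (c + a) / a := by field_simp; ring
    rw [e, mul_div_assoc', div_div_div_cancel_right₀ ha.ne'] at this
    exact this
  have hs := four_mul_div_le_sqrt hg' hN0
  have hγ : 1.9238 ≤ 3 * π / Real.sqrt 24 := by
    have h24 : Real.sqrt 24 ≤ 4.89898 := Real.sqrt_le_iff.2 (by norm_num)
    rw [le_div_iff₀ (by positivity)]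
    linarith only [h24, Real.pi_gt_d6]
  have hf : 0 ≤ 1 - 1.7 / N ^ 2 := by
    rw [sub_nonneg, div_le_one (by positivity)]; nlinarith only [hn']
  have hr : 1.9238 * (4 * G * N / (G ^ 2 + 4 * N)) * (1 - 1.7 / N ^ 2) ≤
      3 * π / Real.sqrt 24 * √N * (1 - 1.7 / N ^ 2) := by
    gcongr
  refine lt_of_lt_of_le ?_ hr
  have key := lt_of_cleared_denominators ha hb hc hN0 hg' h''
  have m1 := mul_le_mul_of_nonneg_left hl1 (sq_nonneg N)
  have m2 := mul_le_mul_of_nonneg_left hl2 hN0.le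
  linarith

/-- Partitions of `n` correspond to partitions of `n + j * a` with at least `j` parts equal
to `a`. -/
theorem card_partition_le_count {a : ℕ} (ha : 0 < a) (j n : ℕ) :
    (Finset.univ.filter fun l : Nat.Partition (n + j * a) ↦ j ≤ l.parts.count a).card =
      Fintype.card (Nat.Partition n) := by
  symm
  rw [← Finset.card_univ]
  refine Finset.card_bij'
    (fun l _ ↦ (⟨l.parts + Multiset.replicate j a, ?_, ?_⟩ : Nat.Partition (n + j * a)))
    (fun l hl ↦ (⟨l.parts - Multiset.replicate j a, ?_, ?_⟩ : Nat.Partition n)) ?_ ?_ ?_ ?_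
  · intro i hi
    rcases Multiset.mem_add.1 hi with h | h
    · exact l.parts_pos h
    · rw [Multiset.eq_of_mem_replicate h]; exact ha
  · simp [l.parts_sum]
  · intro i hi
    exact l.parts_pos (Multiset.mem_of_le (Multiset.sub_le_self _ _) hi)
  · have h1 : Multiset.replicate j a ≤ l.parts :=
      Multiset.le_count_iff_replicate_le.1 (Finset.mem_filter.1 hl).2
    have h2 := congrArg Multiset.sum (Multiset.sub_add_cancel h1)
    rw [Multiset.sum_add, l.parts_sum] at h2
    simpa using h2
  · intro l _
    simp
  · intro l _
    simp
  · intro l _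
    ext1
    simp
  · intro l hl
    ext1
    exact Multiset.sub_add_cancel (Multiset.le_count_iff_replicate_le.1 (Finset.mem_filter.1 hl).2)

theorem card_partition_mono : Monotone fun n ↦ Fintype.card (Nat.Partition n) := by
  refine monotone_nat_of_le_succ fun n ↦ ?_
  have h := card_partition_le_count one_pos 1 n
  rw [one_mul] at h
  rw [← h]
  exact Finset.card_le_univ _

theorem card_partition_filter_le_count {a j : ℕ} (ha : 0 < a) (n : ℕ) :
    (Finset.univ.filter fun l : Nat.Partition n ↦ j ≤ l.parts.count a).card =
      if a * j ≤ n then Fintype.card (Nat.Partition (n - a * j)) else 0 := by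
  split_ifs with h
  · obtain ⟨m, rfl⟩ := Nat.exists_eq_add_of_le' h
    rw [Nat.add_sub_cancel, mul_comm, card_partition_le_count ha]
  · rw [Finset.card_eq_zero, Finset.filter_eq_empty_iff]
    intro l _ hl
    have h1 := Multiset.le_count_iff_replicate_le.1 hl
    have h2 := (Multiset.le_iff_exists_add.1 h1)
    obtain ⟨u, hu⟩ := h2
    have := l.parts_sum
    rw [hu] at this
    simp only [Multiset.sum_add, Multiset.sum_replicate, smul_eq_mul, mul_comm j a] at this
    omega

theorem mul_card_partition (n : ℕ) : n * Fintype.card (Nat.Partition n) =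
    ∑ k ∈ Finset.Icc 1 n, (∑ d ∈ k.divisors, d) * Fintype.card (Nat.Partition (n - k)) := by
  have hcount (l : Nat.Partition n) (a : ℕ) (ha : 0 < a) : l.parts.count a ≤ n := by
    have h1 := Multiset.le_count_iff_replicate_le.1 (le_refl (l.parts.count a))
    obtain ⟨u, hu⟩ := Multiset.le_iff_exists_add.1 h1
    have h2 := l.parts_sum
    have h3 := congrArg Multiset.sum hu
    rw [h2] at h3
    simp only [Multiset.sum_add, Multiset.sum_replicate, smul_eq_mul] at h3
    have h4 := Nat.le_mul_of_pos_right (l.parts.count a) ha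
    omega
  have h1 (l : Nat.Partition n) : n = ∑ a ∈ Finset.Icc 1 n, ∑ j ∈ Finset.Icc 1 n,
      if j ≤ l.parts.count a then a else 0 := by
    conv_lhs => rw [← l.parts_sum]
    rw [Finset.sum_multiset_count_of_subset l.parts (Finset.Icc 1 n)]
    · refine Finset.sum_congr rfl fun a ha ↦ ?_
      rw [← Finset.sum_filter, Finset.sum_const, smul_eq_mul, smul_eq_mul]
      congr 1
      have : Finset.filter (fun j ↦ j ≤ l.parts.count a) (Finset.Icc 1 n) =
          Finset.Icc 1 (l.parts.count a) := by
        ext j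
        simp only [Finset.mem_filter, Finset.mem_Icc]
        have := hcount l a (Finset.mem_Icc.1 ha).1
        omega
      rw [this]
      simp
    · intro a ha
      have ha' := Multiset.mem_toFinset.1 ha
      rw [Finset.mem_Icc]
      exact ⟨l.parts_pos ha', l.le_of_mem_parts ha'⟩
  have h2 : n * Fintype.card (Nat.Partition n) = ∑ a ∈ Finset.Icc 1 n, ∑ j ∈ Finset.Icc 1 n,
      if a * j ≤ n then a * Fintype.card (Nat.Partition (n - a * j)) else 0 := by
    calc n * Fintype.card (Nat.Partition n) = ∑ l : Nat.Partition n, n := by simp [mul_comm]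
      _ = ∑ l : Nat.Partition n, ∑ a ∈ Finset.Icc 1 n, ∑ j ∈ Finset.Icc 1 n,
            if j ≤ l.parts.count a then a else 0 := Finset.sum_congr rfl fun l _ ↦ h1 l
      _ = _ := by
        rw [Finset.sum_comm]
        refine Finset.sum_congr rfl fun a ha ↦ ?_
        rw [Finset.sum_comm]
        refine Finset.sum_congr rfl fun j hj ↦ ?_
        rw [← Finset.sum_filter, Finset.sum_const,
          card_partition_filter_le_count (Finset.mem_Icc.1 ha).1]
        split_ifs <;> simp [mul_comm]
  rw [h2, ← Finset.sum_product', ← Finset.sum_filter]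
  rw [← Finset.sum_fiberwise_of_maps_to (t := Finset.Icc 1 n) (g := fun x : ℕ × ℕ ↦ x.1 * x.2)]
  · refine Finset.sum_congr rfl fun k hk ↦ ?_
    have hk' := Finset.mem_Icc.1 hk
    rw [← Nat.sum_divisorsAntidiagonal (fun d _ ↦ d), Finset.sum_mul]
    have : {x ∈ {x ∈ Finset.Icc 1 n ×ˢ Finset.Icc 1 n | x.1 * x.2 ≤ n} | x.1 * x.2 = k} =
        k.divisorsAntidiagonal := by
      ext ⟨a, j⟩
      simp only [Finset.mem_filter, Finset.mem_product, Finset.mem_Icc,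
        Nat.mem_divisorsAntidiagonal]
      constructor
      · rintro ⟨-, h⟩
        exact ⟨h, by omega⟩
      · rintro ⟨h, h0⟩
        have ha : 0 < a := Nat.pos_of_ne_zero (by rintro rfl; simp at h; omega)
        have hj : 0 < j := Nat.pos_of_ne_zero (by rintro rfl; simp at h; omega)
        have : a ≤ k := by nlinarith
        have : j ≤ k := by nlinarith
        refine ⟨⟨⟨⟨ha, by omega⟩, hj, by omega⟩, by omega⟩, h⟩
    rw [this]
    refine Finset.sum_congr rfl fun x hx ↦ ?_
    rw [(Nat.mem_divisorsAntidiagonal.1 hx).1]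
  · rintro ⟨a, j⟩ h
    simp only [Finset.mem_filter, Finset.mem_product, Finset.mem_Icc] at h ⊢
    exact ⟨Nat.mul_pos h.1.1.1 h.1.2.1, h.2⟩

/-- The sum of divisors of `k`, as a real number. -/
noncomputable def sigmaOne (k : ℕ) : ℝ := ∑ d ∈ k.divisors, (d : ℝ)

theorem sigmaOne_zero : sigmaOne 0 = 0 := by simp [sigmaOne]

theorem sigmaOne_nonneg (k : ℕ) : 0 ≤ sigmaOne k := by unfold sigmaOne; positivity

theorem le_sigmaOne (k : ℕ) : (k : ℝ) ≤ sigmaOne k := by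
  rcases Nat.eq_zero_or_pos k with rfl | hk
  · simp [sigmaOne_zero]
  · exact Finset.single_le_sum (f := fun d : ℕ ↦ (d : ℝ)) (fun i _ ↦ by positivity)
      (Nat.mem_divisors_self k hk.ne')

theorem sigmaOne_le_sq (k : ℕ) : sigmaOne k ≤ (k : ℝ) ^ 2 := by
  have h : sigmaOne k ≤ ∑ d ∈ k.divisors, (k : ℝ) :=
    Finset.sum_le_sum fun d hd ↦ by exact_mod_cast Nat.divisor_le hd
  refine h.trans ?_
  rw [Finset.sum_const, nsmul_eq_mul, sq]
  gcongr
  exact Nat.card_divisors_le_self k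

theorem summable_sigmaOne_mul_pow {r : ℝ} (hr : 0 ≤ r) (hr' : r < 1) (j : ℕ) :
    Summable fun k : ℕ ↦ sigmaOne k * (k : ℝ) ^ j * r ^ k := by
  refine Summable.of_nonneg_of_le (fun k ↦ ?_) (fun k ↦ ?_)
    (summable_pow_mul_geometric_of_norm_lt_one (R := ℝ) (2 + j) (r := r)
      (by rwa [Real.norm_of_nonneg hr]))
  · have := sigmaOne_nonneg k; positivity
  · rw [pow_add]
    gcongr
    exact sigmaOne_le_sq k

theorem summable_sigmaOne_div_mul_pow {r : ℝ} (hr : 0 ≤ r) (hr' : r < 1) :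
    Summable fun k : ℕ ↦ sigmaOne k / k * r ^ k := by
  refine Summable.of_nonneg_of_le (fun k ↦ ?_) (fun k ↦ ?_)
    (summable_sigmaOne_mul_pow hr hr' 0)
  · have := sigmaOne_nonneg k; positivity
  · rcases Nat.eq_zero_or_pos k with rfl | hk
    · simp [sigmaOne_zero]
    · have h1 : (1 : ℝ) ≤ k := by exact_mod_cast hk
      rw [pow_zero, mul_one]
      gcongr
      exact div_le_self (sigmaOne_nonneg k) h1

/-- The logarithm `∑ σ(k) z ^ k / k` of the partition generating function. -/
noncomputable def eulerLog (z : ℂ) : ℂ := ∑' k : ℕ, ((sigmaOne k / k : ℝ) : ℂ) * z ^ k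

theorem eulerLog_zero : eulerLog 0 = 0 := by
  unfold eulerLog
  rw [tsum_eq_single 0]
  · simp
  · intro k hk; simp [hk]

theorem norm_sigmaOne_div_mul_pow (k : ℕ) (z : ℂ) :
    ‖((sigmaOne k / k : ℝ) : ℂ) * z ^ k‖ = sigmaOne k / k * ‖z‖ ^ k := by
  have := sigmaOne_nonneg k
  rw [norm_mul, norm_pow, Complex.norm_of_nonneg (by positivity)]

theorem differentiableOn_eulerLog {r : ℝ} (hr : 0 ≤ r) (hr' : r < 1) :
    DifferentiableOn ℂ eulerLog (Metric.ball 0 r) := by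
  refine Complex.differentiableOn_tsum_of_summable_norm (summable_sigmaOne_div_mul_pow hr hr')
    (fun k ↦ by fun_prop) Metric.isOpen_ball fun k w hw ↦ ?_
  rw [norm_sigmaOne_div_mul_pow]
  have := sigmaOne_nonneg k
  have hw : ‖w‖ < r := by simpa using hw
  gcongr

theorem diffContOnCl_exp_eulerLog {r : ℝ} (hr : 0 ≤ r) (hr' : r < 1) :
    DiffContOnCl ℂ (fun z ↦ Complex.exp (eulerLog z)) (Metric.ball 0 r) := by
  refine DifferentiableOn.diffContOnCl ?_
  refine ((differentiableOn_eulerLog (r := (r + 1) / 2) (by linarith)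
    (by linarith)).cexp).mono ?_
  refine Metric.closure_ball_subset_closedBall.trans ?_
  exact Metric.closedBall_subset_ball (by linarith)

/-- The Fourier coefficients of the partition generating function on the circle of radius `r`. -/
noncomputable def eulerCoeff (r : ℝ) (m : ℤ) : ℂ :=
  ∫ θ in (0 : ℝ)..(2 * π),
    Complex.exp (eulerLog (circleMap 0 r θ)) * Complex.exp (-(m * θ * Complex.I))

theorem eulerCoeff_neg {r : ℝ} (hr : 0 < r) (hr' : r < 1) (k : ℕ) :
    eulerCoeff r (-(k + 1 : ℕ)) = 0 := by
  have h := ((Differentiable.diffContOnCl (f := fun z : ℂ ↦ z ^ k)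
    (s := Metric.ball 0 r) (by fun_prop)).smul
    (diffContOnCl_exp_eulerLog hr.le hr')).circleIntegral_eq_zero hr.le
  rw [circleIntegral] at h
  have h2 : (∫ θ in (0 : ℝ)..(2 * π), ((r : ℂ) ^ (k + 1) * Complex.I) *
      (Complex.exp (eulerLog (circleMap 0 r θ)) *
        Complex.exp (-(((-(k + 1 : ℕ) : ℤ) : ℂ) * θ * Complex.I)))) = 0 := by
    refine (intervalIntegral.integral_congr fun θ _ ↦ ?_).trans h
    have : Complex.exp (-(((-(k + 1 : ℕ) : ℤ) : ℂ) * θ * Complex.I)) =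
        Complex.exp (θ * Complex.I) ^ (k + 1) := by
      rw [← Complex.exp_nat_mul]; congr 1; push_cast; ring
    simp only [this, deriv_circleMap, smul_eq_mul, circleMap, zero_add]
    ring
  rw [intervalIntegral.integral_const_mul] at h2
  refine (mul_eq_zero.1 h2).resolve_left ?_
  simp [hr.ne']

theorem eulerCoeff_zero {r : ℝ} (hr : 0 < r) (hr' : r < 1) : eulerCoeff r 0 = 2 * π := by
  have h := (diffContOnCl_exp_eulerLog hr.le hr').circleIntegral_sub_inv_smul
    (w := 0) (by simpa using hr)
  rw [circleIntegral] at h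
  have h2 : Complex.I * eulerCoeff r 0 = (2 * π * Complex.I : ℂ) • Complex.exp (eulerLog 0) := by
    rw [← h, eulerCoeff, ← intervalIntegral.integral_const_mul]
    refine intervalIntegral.integral_congr fun θ _ ↦ ?_
    have hz : circleMap 0 r θ ≠ 0 := circleMap_ne_center hr.ne'
    simp only [deriv_circleMap, smul_eq_mul, sub_zero]
    field_simp
    simp
  rw [eulerLog_zero, Complex.exp_zero, smul_eq_mul, mul_one, mul_comm] at h2
  exact mul_right_cancel₀ Complex.I_ne_zero h2

theorem hasDerivAt_eulerLog_circleMap {r : ℝ} (hr : 0 ≤ r) (hr' : r < 1) (θ : ℝ) :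
    HasDerivAt (fun θ : ℝ ↦ eulerLog (circleMap 0 r θ))
      (∑' k : ℕ, (sigmaOne k : ℂ) * circleMap 0 r θ ^ k * Complex.I) θ := by
  have hn : ∀ θ : ℝ, ‖circleMap 0 r θ‖ = r := fun θ ↦ by simp [abs_of_nonneg hr]
  refine hasDerivAt_tsum (u := fun k : ℕ ↦ sigmaOne k * (k : ℝ) ^ 0 * r ^ k)
    (g' := fun k θ ↦ (sigmaOne k : ℂ) * circleMap 0 r θ ^ k * Complex.I)
    (summable_sigmaOne_mul_pow hr hr' 0) (fun k y ↦ ?_) (fun k y ↦ ?_) (y₀ := 0) ?_ θ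
  · have := ((hasDerivAt_circleMap 0 r y).pow k).const_mul ((sigmaOne k / k : ℝ) : ℂ)
    convert! this using 1
    rcases k with _ | k
    · simp [sigmaOne_zero]
    · have : ((k + 1 : ℕ) : ℂ) ≠ 0 := by exact_mod_cast Nat.succ_ne_zero k
      push_cast at this ⊢
      field_simp
      ring
  · rw [norm_mul, norm_mul, norm_pow, hn, Complex.norm_of_nonneg (sigmaOne_nonneg k)]
    simp
  · refine Summable.of_norm ?_
    simp_rw [norm_sigmaOne_div_mul_pow, hn]
    exact summable_sigmaOne_div_mul_pow hr hr'

theorem continuous_eulerLog_circleMap {r : ℝ} (hr : 0 ≤ r) (hr' : r < 1) :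
    Continuous fun θ : ℝ ↦ eulerLog (circleMap 0 r θ) :=
  continuous_iff_continuousAt.2 fun θ ↦ (hasDerivAt_eulerLog_circleMap hr hr' θ).continuousAt

theorem norm_sigmaOne_mul_circleMap_pow {r : ℝ} (hr : 0 ≤ r) (k : ℕ) (θ : ℝ) :
    ‖(sigmaOne k : ℂ) * circleMap 0 r θ ^ k‖ = sigmaOne k * (k : ℝ) ^ 0 * r ^ k := by
  rw [norm_mul, norm_pow, Complex.norm_of_nonneg (sigmaOne_nonneg k)]
  simp [abs_of_nonneg hr]

theorem integral_eulerLog_deriv_mul {r : ℝ} (hr : 0 < r) (hr' : r < 1) (m : ℤ) :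
    (∫ θ in (0 : ℝ)..(2 * π), (∑' k : ℕ, (sigmaOne k : ℂ) * circleMap 0 r θ ^ k) *
      (Complex.exp (eulerLog (circleMap 0 r θ)) * Complex.exp (-(m * θ * Complex.I)))) =
      m * eulerCoeff r m := by
  have hcont := continuous_eulerLog_circleMap hr.le hr'
  have hcS : Continuous fun θ : ℝ ↦ ∑' k : ℕ, (sigmaOne k : ℂ) * circleMap 0 r θ ^ k :=
    continuous_tsum (fun k ↦ continuous_const.mul ((continuous_circleMap 0 r).pow k))
      (summable_sigmaOne_mul_pow hr.le hr' 0)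
      fun k θ ↦ (norm_sigmaOne_mul_circleMap_pow hr.le k θ).le
  set W : ℝ → ℂ := fun θ ↦
    Complex.exp (eulerLog (circleMap 0 r θ)) * Complex.exp (-(m * θ * Complex.I)) with hW
  have hcW : Continuous W := by
    refine hcont.cexp.mul ?_
    fun_prop
  have hderiv : ∀ θ : ℝ, HasDerivAt W
      ((∑' k : ℕ, (sigmaOne k : ℂ) * circleMap 0 r θ ^ k - m) * W θ * Complex.I) θ := by
    intro θ
    have h1 := (hasDerivAt_eulerLog_circleMap hr.le hr' θ).cexp
    have h2 : HasDerivAt (fun θ : ℝ ↦ Complex.exp (-(m * θ * Complex.I)))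
        (Complex.exp (-(m * θ * Complex.I)) * -(m * 1 * Complex.I)) θ :=
      ((((hasDerivAt_id θ).ofReal_comp).const_mul (m : ℂ)).mul_const Complex.I).neg.cexp
    convert! h1.mul h2 using 1
    rw [tsum_mul_right]
    simp only [hW]
    ring
  have hintegral := intervalIntegral.integral_eq_sub_of_hasDerivAt (a := 0) (b := 2 * π)
    (fun θ _ ↦ hderiv θ)
    (Continuous.intervalIntegrable (by fun_prop) _ _)
  have hper : W (2 * π) = W 0 := by
    simp only [hW]
    congr 1
    · rw [show circleMap 0 r (2 * π) = circleMap 0 r 0 by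
        simpa using periodic_circleMap 0 r 0]
    · rw [Complex.exp_eq_exp_iff_exists_int]
      exact ⟨-m, by push_cast; ring⟩
  rw [hper, sub_self, intervalIntegral.integral_mul_const] at hintegral
  have h0 := (mul_eq_zero.1 hintegral).resolve_right Complex.I_ne_zero
  simp_rw [sub_mul] at h0
  rw [intervalIntegral.integral_sub
    (f := fun θ ↦ (∑' k : ℕ, (sigmaOne k : ℂ) * circleMap 0 r θ ^ k) * W θ)
    (g := fun θ ↦ m * W θ) (Continuous.intervalIntegrable (by fun_prop) _ _)
    (Continuous.intervalIntegrable (by fun_prop) _ _),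
    intervalIntegral.integral_const_mul, sub_eq_zero] at h0
  exact h0

theorem hasSum_eulerCoeff {r : ℝ} (hr : 0 < r) (hr' : r < 1) (m : ℤ) :
    HasSum (fun k : ℕ ↦ (sigmaOne k : ℂ) * (r : ℂ) ^ k * eulerCoeff r (m - k))
      (m * eulerCoeff r m) := by
  rw [← integral_eulerLog_deriv_mul hr hr' m]
  have hs := summable_sigmaOne_mul_pow hr.le hr' 0
  have hnk := norm_sigmaOne_mul_circleMap_pow hr.le
  have hcont := continuous_eulerLog_circleMap hr.le hr'
  obtain ⟨W, hW⟩ : ∃ W : ℝ → ℂ, ∀ θ, Complex.exp (eulerLog (circleMap 0 r θ)) *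
    Complex.exp (-(m * θ * Complex.I)) = W θ := ⟨_, fun _ ↦ rfl⟩
  have hcW : Continuous W := by
    simp_rw [← funext hW]
    fun_prop
  simp_rw [hW]
  obtain ⟨M, hM⟩ := isCompact_uIcc.exists_bound_of_continuousOn
    (s := Set.uIcc 0 (2 * π)) hcW.continuousOn
  have hlim : ∀ θ, HasSum (fun k : ℕ ↦ (sigmaOne k : ℂ) * circleMap 0 r θ ^ k * W θ)
      ((∑' k : ℕ, (sigmaOne k : ℂ) * circleMap 0 r θ ^ k) * W θ) := fun θ ↦ by
    have h1 : Summable fun k : ℕ ↦ (sigmaOne k : ℂ) * circleMap 0 r θ ^ k :=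
      Summable.of_norm (by simp_rw [hnk]; exact hs)
    exact h1.hasSum.mul_right _
  have key := intervalIntegral.hasSum_integral_of_dominated_convergence
    (μ := MeasureTheory.volume) (a := 0) (b := 2 * π)
    (F := fun (k : ℕ) (θ : ℝ) ↦ (sigmaOne k : ℂ) * circleMap 0 r θ ^ k * W θ)
    (f := fun θ ↦ (∑' k : ℕ, (sigmaOne k : ℂ) * circleMap 0 r θ ^ k) * W θ)
    (fun k _ ↦ sigmaOne k * (k : ℝ) ^ 0 * r ^ k * M)
    (fun k ↦ Continuous.aestronglyMeasurable (by fun_prop))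
    (fun k ↦ Filter.Eventually.of_forall fun θ hθ ↦ by
      rw [norm_mul, hnk]
      have := sigmaOne_nonneg k
      gcongr
      exact hM θ (Set.uIoc_subset_uIcc hθ))
    (Filter.Eventually.of_forall fun θ _ ↦ hs.mul_right M) (by simp)
    (Filter.Eventually.of_forall fun θ _ ↦ hlim θ)
  refine key.congr_fun fun k ↦ ?_
  rw [eulerCoeff, ← intervalIntegral.integral_const_mul]
  refine intervalIntegral.integral_congr fun θ _ ↦ ?_
  have h1 : Complex.exp (-((m - k : ℤ) * θ * Complex.I)) =
      Complex.exp (θ * Complex.I) ^ k * Complex.exp (-(m * θ * Complex.I)) := by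
    rw [← Complex.exp_nat_mul, ← Complex.exp_add]; congr 1; push_cast; ring
  simp only [← hW, h1]
  rw [circleMap_zero, mul_pow]
  ring

/-- Cauchy's formula for the partition numbers. -/
theorem eulerCoeff_eq_card_partition {r : ℝ} (hr : 0 < r) (hr' : r < 1) (n : ℕ) :
    eulerCoeff r n = 2 * π * Fintype.card (Nat.Partition n) * r ^ n := by
  induction n using Nat.strong_induction_on with
  | _ n ih =>
    rcases Nat.eq_zero_or_pos n with rfl | hn
    · simpa using eulerCoeff_zero hr hr'
    have hsum := hasSum_eulerCoeff hr hr' n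
    have hfin : HasSum (fun k : ℕ ↦ (sigmaOne k : ℂ) * (r : ℂ) ^ k * eulerCoeff r ((n : ℤ) - k))
        (∑ k ∈ Finset.Icc 1 n, (sigmaOne k : ℂ) * (r : ℂ) ^ k * eulerCoeff r ((n : ℤ) - k)) := by
      refine hasSum_sum_of_ne_finset_zero fun k hk ↦ ?_
      rcases Nat.eq_zero_or_pos k with rfl | hk0
      · simp [sigmaOne_zero]
      · have hlt : n < k := by
          by_contra hle
          exact hk (Finset.mem_Icc.2 ⟨hk0, not_lt.1 hle⟩)
        have : (n : ℤ) - k = -((k - n - 1) + 1 : ℕ) := by omega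
        rw [this, eulerCoeff_neg hr hr', mul_zero]
    have heq := hsum.unique hfin
    have hrec : (n : ℂ) * Fintype.card (Nat.Partition n) =
        ∑ k ∈ Finset.Icc 1 n, (sigmaOne k : ℂ) * Fintype.card (Nat.Partition (n - k)) := by
      have := congrArg (Nat.cast : ℕ → ℂ) (mul_card_partition n)
      push_cast at this
      rw [this]
      refine Finset.sum_congr rfl fun k _ ↦ ?_
      simp [sigmaOne]
    have hn0 : (n : ℂ) ≠ 0 := by exact_mod_cast hn.ne'
    refine mul_left_cancel₀ hn0 ?_
    rw [show (n : ℂ) * (2 * π * Fintype.card (Nat.Partition n) * r ^ n) =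
      (n * Fintype.card (Nat.Partition n)) * (2 * π * r ^ n) by ring, hrec, Finset.sum_mul]
    push_cast at heq
    rw [heq]
    refine Finset.sum_congr rfl fun k hk ↦ ?_
    obtain ⟨hk1, hk2⟩ := Finset.mem_Icc.1 hk
    have h2 := ih (n - k) (by omega)
    rw [show (n : ℤ) - k = ((n - k : ℕ) : ℤ) by omega, h2]
    rw [← Nat.sub_add_cancel hk2, pow_add, Nat.sub_add_cancel hk2]
    ring

/-- The logarithm `∑ σ(k) r ^ k / k` of the partition generating function at real `r`. -/
noncomputable def eulerG (r : ℝ) : ℝ := ∑' k : ℕ, sigmaOne k / k * r ^ k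

/-- The drop of the real part of `eulerLog` from `r` to `r * exp (θ * I)`. -/
noncomputable def eulerR (r θ : ℝ) : ℝ := ∑' k : ℕ, sigmaOne k / k * r ^ k * (1 - cos (k * θ))

/-- The imaginary part of `eulerLog` at `r * exp (θ * I)`. -/
noncomputable def eulerI (r θ : ℝ) : ℝ := ∑' k : ℕ, sigmaOne k / k * r ^ k * sin (k * θ)

/-- The cumulant series `∑ σ(k) k ^ j r ^ k`. -/
noncomputable def eulerKappa (j : ℕ) (r : ℝ) : ℝ := ∑' k : ℕ, sigmaOne k * (k : ℝ) ^ j * r ^ k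

theorem abs_eulerTerm_mul_le {r : ℝ} (hr : 0 ≤ r) (k : ℕ) {x b : ℝ} (hx : |x| ≤ b) :
    ‖sigmaOne k / k * r ^ k * x‖ ≤ sigmaOne k / k * r ^ k * b := by
  have := sigmaOne_nonneg k
  rw [norm_mul, Real.norm_of_nonneg (by positivity : 0 ≤ sigmaOne k / k * r ^ k)]
  gcongr
  exact hx

theorem abs_one_sub_cos_le_two (x : ℝ) : |1 - cos x| ≤ 2 := by
  rw [abs_le]; constructor <;> linarith [cos_le_one x, neg_one_le_cos x]

theorem summable_eulerR {r : ℝ} (hr : 0 ≤ r) (hr' : r < 1) (θ : ℝ) :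
    Summable fun k : ℕ ↦ sigmaOne k / k * r ^ k * (1 - cos (k * θ)) :=
  Summable.of_norm_bounded ((summable_sigmaOne_div_mul_pow hr hr').mul_right 2)
    fun k ↦ abs_eulerTerm_mul_le hr k (abs_one_sub_cos_le_two _)

theorem summable_eulerI {r : ℝ} (hr : 0 ≤ r) (hr' : r < 1) (θ : ℝ) :
    Summable fun k : ℕ ↦ sigmaOne k / k * r ^ k * sin (k * θ) :=
  Summable.of_norm_bounded ((summable_sigmaOne_div_mul_pow hr hr').mul_right 1)
    fun k ↦ abs_eulerTerm_mul_le hr k (abs_sin_le_one _)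

theorem continuous_eulerR {r : ℝ} (hr : 0 ≤ r) (hr' : r < 1) : Continuous (eulerR r) :=
  continuous_tsum (fun k ↦ by fun_prop) ((summable_sigmaOne_div_mul_pow hr hr').mul_right 2)
    fun k _ ↦ abs_eulerTerm_mul_le hr k (abs_one_sub_cos_le_two _)

theorem continuous_eulerI {r : ℝ} (hr : 0 ≤ r) (hr' : r < 1) : Continuous (eulerI r) :=
  continuous_tsum (fun k ↦ by fun_prop) ((summable_sigmaOne_div_mul_pow hr hr').mul_right 1)
    fun k _ ↦ abs_eulerTerm_mul_le hr k (abs_sin_le_one _)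

theorem eulerLog_circleMap {r : ℝ} (hr : 0 ≤ r) (hr' : r < 1) (θ : ℝ) :
    eulerLog (circleMap 0 r θ) = ⟨eulerG r - eulerR r θ, eulerI r θ⟩ := by
  have hz : ∀ k : ℕ, circleMap 0 r θ ^ k =
      ((r ^ k : ℝ) : ℂ) * ⟨cos (k * θ), sin (k * θ)⟩ := fun k ↦ by
    rw [circleMap_zero, mul_pow, ← Complex.exp_nat_mul, ← mul_assoc,
      show ((k : ℂ) * θ) = ((k * θ : ℝ) : ℂ) by push_cast; ring]
    congr 1
    · push_cast; rfl
    · apply Complex.ext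
      · rw [Complex.exp_ofReal_mul_I_re]
      · rw [Complex.exp_ofReal_mul_I_im]
  refine HasSum.tsum_eq ?_
  rw [Complex.hasSum_iff]
  have h1 := ((summable_sigmaOne_div_mul_pow hr hr').hasSum).sub
    (summable_eulerR hr hr' θ).hasSum
  have h2 := (summable_eulerI hr hr' θ).hasSum
  refine ⟨h1.congr_fun fun k ↦ ?_, h2.congr_fun fun k ↦ ?_⟩
  · rw [hz, ← mul_assoc, ← Complex.ofReal_mul, Complex.re_ofReal_mul]
    ring
  · rw [hz, ← mul_assoc, ← Complex.ofReal_mul, Complex.im_ofReal_mul]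

theorem integral_exp_neg_eulerR_mul_cos {r : ℝ} (hr : 0 < r) (hr' : r < 1) (n : ℕ) :
    ∫ θ in (0 : ℝ)..π, rexp (-eulerR r θ) * cos (eulerI r θ - n * θ) =
      π * p n * r ^ n * rexp (-eulerG r) := by
  have hR := continuous_eulerR hr.le hr'
  have hI := continuous_eulerI hr.le hr'
  obtain ⟨f, hf⟩ : ∃ f : ℝ → ℝ, ∀ θ, rexp (-eulerR r θ) * cos (eulerI r θ - n * θ) = f θ :=
    ⟨_, fun _ ↦ rfl⟩
  have hfc : Continuous f := by
    simp_rw [← funext hf]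
    fun_prop
  simp_rw [hf]
  have hfs : ∀ θ, f (2 * π - θ) = f θ := fun θ ↦ by
    have hc : ∀ k : ℕ, cos (k * (2 * π - θ)) = cos (k * θ) := fun k ↦ by
      rw [show (k : ℝ) * (2 * π - θ) = k * (2 * π) - k * θ by ring, cos_nat_mul_two_pi_sub]
    have hs : ∀ k : ℕ, sin (k * (2 * π - θ)) = -sin (k * θ) := fun k ↦ by
      rw [show (k : ℝ) * (2 * π - θ) = k * (2 * π) - k * θ by ring, sin_nat_mul_two_pi_sub]
    have h1 : eulerR r (2 * π - θ) = eulerR r θ := by simp only [eulerR, hc]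
    have h2 : eulerI r (2 * π - θ) = -eulerI r θ := by
      simp only [eulerI, hs, mul_neg, tsum_neg]
    rw [← hf, ← hf, h1, h2, show -eulerI r θ - n * (2 * π - θ) =
      -(n * (2 * π) - -(eulerI r θ - n * θ) - 2 * (eulerI r θ - n * θ) + 2 * (eulerI r θ - n * θ))
      by ring]
    rw [cos_neg, sub_add_cancel, cos_nat_mul_two_pi_sub, cos_neg]
  have hsplit : ∫ θ in (0 : ℝ)..(2 * π), f θ = 2 * ∫ θ in (0 : ℝ)..π, f θ := by
    rw [← intervalIntegral.integral_add_adjacent_intervals (hfc.intervalIntegrable 0 π)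
      (hfc.intervalIntegrable π (2 * π))]
    have h3 : ∫ θ in (0 : ℝ)..π, f (2 * π - θ) = ∫ θ in π..(2 * π), f θ := by
      rw [intervalIntegral.integral_comp_sub_left]
      congr 1 <;> ring
    simp_rw [hfs] at h3
    rw [← h3]
    ring
  have hc := congrArg Complex.re (eulerCoeff_eq_card_partition hr hr' n)
  rw [eulerCoeff] at hc
  have hcl := continuous_eulerLog_circleMap hr.le hr'
  have hre := intervalIntegral.intervalIntegral_re (𝕜 := ℂ) (μ := MeasureTheory.volume)
    (a := 0) (b := 2 * π)
    (f := fun θ : ℝ ↦ Complex.exp (eulerLog (circleMap 0 r θ)) *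
      Complex.exp (-(((n : ℤ) : ℂ) * θ * Complex.I)))
    (Continuous.intervalIntegrable (by fun_prop) _ _)
  have hterm : ∀ θ : ℝ, (Complex.exp (eulerLog (circleMap 0 r θ)) *
      Complex.exp (-(((n : ℤ) : ℂ) * θ * Complex.I))).re = rexp (eulerG r) * f θ := fun θ ↦ by
    rw [← Complex.exp_add, eulerLog_circleMap hr.le hr', Complex.exp_re, ← hf, ← mul_assoc,
      ← Real.exp_add]
    congr 2 <;> simp <;> ring
  simp only [RCLike.re_to_complex, hterm] at hre
  rw [intervalIntegral.integral_const_mul, hsplit, hc] at hre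
  have hval : (2 * (π : ℂ) * (Fintype.card (Nat.Partition n) : ℂ) * (r : ℂ) ^ n).re =
      2 * (π * p n * r ^ n) := by
    rw [show 2 * (π : ℂ) * (Fintype.card (Nat.Partition n) : ℂ) * (r : ℂ) ^ n =
      ((2 * (π * p n * r ^ n) : ℝ) : ℂ) by simp only [p]; push_cast; ring, Complex.ofReal_re]
  rw [hval] at hre
  rw [Real.exp_neg, ← div_eq_mul_inv, eq_div_iff (exp_pos _).ne']
  linarith

theorem cos_le_quartic (x : ℝ) : cos x ≤ 1 - x ^ 2 / 2 + x ^ 4 / 24 := by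
  wlog hx : 0 ≤ x generalizing x
  · have := this (-x) (by linarith)
    rw [cos_neg] at this
    linarith [this, show (-x) ^ 2 = x ^ 2 by ring, show (-x) ^ 4 = x ^ 4 by ring]
  have hd : ∀ y : ℝ, HasDerivAt (fun y ↦ 1 - y ^ 2 / 2 + y ^ 4 / 24 - cos y)
      (-(2 * y / 2) + 4 * y ^ 3 / 24 + sin y) y := fun y ↦ by
    have h := (((hasDerivAt_const y (1 : ℝ)).sub ((hasDerivAt_pow 2 y).div_const 2)).add
      ((hasDerivAt_pow 4 y).div_const 24)).sub (hasDerivAt_cos y)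
    convert! h using 1
    simp
  have hm : MonotoneOn (fun y : ℝ ↦ 1 - y ^ 2 / 2 + y ^ 4 / 24 - cos y) (Set.Ici 0) :=
    monotoneOn_of_deriv_nonneg (convex_Ici 0) (by fun_prop)
      (fun y _ ↦ (hd y).differentiableAt.differentiableWithinAt) fun y hy ↦ by
      rw [interior_Ici] at hy
      rw [(hd y).deriv]
      have := sin_ge_sub_cube (le_of_lt hy)
      linarith
  have := hm Set.self_mem_Ici (Set.mem_Ici.2 hx) hx
  simp only [cos_zero] at this
  linarith

theorem abs_sin_sub_le (x : ℝ) : |sin x - x| ≤ |x| ^ 3 / 6 := by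
  wlog hx : 0 ≤ x generalizing x
  · have := this (-x) (by linarith)
    rwa [sin_neg, abs_neg, show -sin x - -x = -(sin x - x) by ring, abs_neg] at this
  rw [abs_of_nonneg hx, abs_le]
  constructor
  · linarith [sin_ge_sub_cube hx]
  · linarith [sin_le hx, pow_nonneg hx 3]

theorem hasSum_eulerKappa {r : ℝ} (hr : 0 ≤ r) (hr' : r < 1) (j : ℕ) (c : ℝ) :
    HasSum (fun k : ℕ ↦ sigmaOne k / k * r ^ k * ((k : ℝ) ^ (j + 1) * c))
      (eulerKappa j r * c) := by
  refine ((summable_sigmaOne_mul_pow hr hr' j).hasSum.mul_right c).congr_fun fun k ↦ ?_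
  rcases Nat.eq_zero_or_pos k with rfl | hk
  · simp [sigmaOne_zero]
  · have : (k : ℝ) ≠ 0 := by positivity
    field_simp
    ring

theorem eulerR_nonneg {r : ℝ} (hr : 0 ≤ r) (θ : ℝ) : 0 ≤ eulerR r θ :=
  tsum_nonneg fun k ↦ by
    have := sigmaOne_nonneg k
    have h2 := cos_le_one (k * θ)
    exact mul_nonneg (by positivity) (by linarith)

theorem eulerR_le {r : ℝ} (hr : 0 ≤ r) (hr' : r < 1) (θ : ℝ) :
    eulerR r θ ≤ eulerKappa 1 r * (θ ^ 2 / 2) := by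
  refine hasSum_le (fun k ↦ ?_) (summable_eulerR hr hr' θ).hasSum
    (hasSum_eulerKappa hr hr' 1 (θ ^ 2 / 2))
  have := sigmaOne_nonneg k
  gcongr
  linarith [one_sub_sq_div_two_le_cos (x := k * θ), mul_pow (k : ℝ) θ 2]

theorem le_eulerR {r : ℝ} (hr : 0 ≤ r) (hr' : r < 1) (θ : ℝ) :
    eulerKappa 1 r * (θ ^ 2 / 2) - eulerKappa 3 r * (θ ^ 4 / 24) ≤ eulerR r θ := by
  refine hasSum_le (fun k ↦ ?_) ((hasSum_eulerKappa hr hr' 1 (θ ^ 2 / 2)).sub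
    (hasSum_eulerKappa hr hr' 3 (θ ^ 4 / 24))) (summable_eulerR hr hr' θ).hasSum
  have := sigmaOne_nonneg k
  rw [← mul_sub]
  refine mul_le_mul_of_nonneg_left ?_ (by positivity)
  linarith [cos_le_quartic (k * θ), mul_pow (k : ℝ) θ 2, mul_pow (k : ℝ) θ 4]

theorem abs_eulerI_sub_le {r : ℝ} (hr : 0 ≤ r) (hr' : r < 1) {θ : ℝ} (hθ : 0 ≤ θ) :
    |eulerI r θ - eulerKappa 0 r * θ| ≤ eulerKappa 2 r * (θ ^ 3 / 6) := by
  have h := (summable_eulerI hr hr' θ).hasSum.sub (hasSum_eulerKappa hr hr' 0 θ)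
  have h2 := hasSum_eulerKappa hr hr' 2 (θ ^ 3 / 6)
  have hb : ∀ k : ℕ, |sin (k * θ) - (k : ℝ) ^ (0 + 1) * θ| ≤ (k : ℝ) ^ (2 + 1) * (θ ^ 3 / 6) :=
    fun k ↦ by
      have := abs_sin_sub_le (k * θ)
      rw [abs_of_nonneg (by positivity : (0 : ℝ) ≤ k * θ)] at this
      rw [zero_add, pow_one]
      linarith [mul_pow (k : ℝ) θ 3]
  rw [abs_le]
  constructor
  · refine hasSum_le (fun k ↦ ?_) h2.neg h
    have := sigmaOne_nonneg k
    rw [← mul_sub, ← mul_neg]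
    gcongr
    exact neg_le_of_abs_le (hb k)
  · refine hasSum_le (fun k ↦ ?_) h h2
    have := sigmaOne_nonneg k
    rw [← mul_sub]
    gcongr
    exact le_of_abs_le (hb k)

theorem p_mul_pow_le {r : ℝ} (hr : 0 < r) (hr' : r < 1) (n : ℕ) :
    p n * r ^ n ≤ rexp (eulerG r) := by
  have h := integral_exp_neg_eulerR_mul_cos hr hr' n
  have hR := continuous_eulerR hr.le hr'
  have hI := continuous_eulerI hr.le hr'
  have h2 : ∫ θ in (0 : ℝ)..π, rexp (-eulerR r θ) * cos (eulerI r θ - n * θ) ≤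
      ∫ θ in (0 : ℝ)..π, (1 : ℝ) := by
    refine intervalIntegral.integral_mono_on pi_pos.le
      (Continuous.intervalIntegrable (by fun_prop) _ _) (by simp) fun θ _ ↦ ?_
    have h3 : rexp (-eulerR r θ) ≤ 1 := exp_le_one_iff.2 (by linarith [eulerR_nonneg hr.le θ])
    nlinarith [cos_le_one (eulerI r θ - n * θ), exp_pos (-eulerR r θ)]
  rw [h, intervalIntegral.integral_const, sub_zero, smul_eq_mul, mul_one, exp_neg, mul_assoc,
    mul_assoc, mul_le_iff_le_one_right pi_pos, ← mul_assoc, ← div_eq_mul_inv,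
    div_le_one (exp_pos _)] at h2
  exact h2

theorem hasSum_pow_mul_one_sub_cos {r : ℝ} (hr : 0 ≤ r) (hr' : r < 1) (θ : ℝ) :
    HasSum (fun k : ℕ ↦ r ^ k * (1 - cos (k * θ)))
      (r * (1 - cos θ) * (1 + r) / ((1 - r) * ((1 - r) ^ 2 + 2 * r * (1 - cos θ)))) := by
  have h1 := hasSum_geometric_of_lt_one hr hr'
  have h2 := (Complex.hasSum_iff _ _).1 (hasSum_geometric_of_norm_lt_one
    (ξ := circleMap 0 r θ) (by simpa [abs_of_nonneg hr] using hr'))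
  convert! h1.sub h2.1 using 1
  · funext k
    rw [circleMap_zero, mul_pow, ← Complex.exp_nat_mul, ← mul_assoc,
      show ((k : ℂ) * θ) = ((k * θ : ℝ) : ℂ) by push_cast; ring, ← Complex.ofReal_pow,
      Complex.re_ofReal_mul, Complex.exp_ofReal_mul_I_re]
    ring
  · rw [Complex.inv_re, Complex.normSq_apply, circleMap_zero]
    have e1 : (1 - (r : ℂ) * Complex.exp (θ * Complex.I)).re = 1 - r * cos θ := by
      simp [Complex.exp_ofReal_mul_I_re]
    have e2 : (1 - (r : ℂ) * Complex.exp (θ * Complex.I)).im = -(r * sin θ) := by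
      simp [Complex.exp_ofReal_mul_I_im]
    rw [e1, e2]
    have h3 : 0 < 1 - r := by linarith
    have h4 : 0 < (1 - r) ^ 2 + 2 * r * (1 - cos θ) := by
      have := cos_le_one θ
      have : 0 ≤ 2 * r * (1 - cos θ) := mul_nonneg (by positivity) (by linarith)
      positivity
    have h5 : (1 - r * cos θ) * (1 - r * cos θ) + -(r * sin θ) * -(r * sin θ) =
        (1 - r) ^ 2 + 2 * r * (1 - cos θ) := by
      linear_combination r ^ 2 * sin_sq_add_cos_sq θ
    rw [h5, inv_eq_one_div, div_sub_div _ _ h3.ne' h4.ne',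
      div_eq_div_iff (mul_pos h3 h4).ne' (mul_pos h3 h4).ne']
    ring

theorem geometric_le_eulerR {t : ℝ} (ht : 0 < t) (ht' : t < 1) (θ : ℝ) :
    (1 - t) * (2 - t) * (1 - cos θ) / (t * (t ^ 2 + 2 * (1 - cos θ))) ≤ eulerR (rexp (-t)) θ := by
  have hr1 : 1 - t ≤ rexp (-t) := one_sub_le_exp_neg t
  have hr2 : rexp (-t) < 1 := by rw [exp_lt_one_iff]; linarith
  have hr0 := exp_pos (-t)
  set r := rexp (-t)
  have hs : 0 ≤ 1 - cos θ := by linarith [cos_le_one θ]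
  have h : r * (1 - cos θ) * (1 + r) / ((1 - r) * ((1 - r) ^ 2 + 2 * r * (1 - cos θ))) ≤
      eulerR r θ := by
    refine hasSum_le (fun k ↦ ?_) (hasSum_pow_mul_one_sub_cos hr0.le hr2 θ)
      (summable_eulerR hr0.le hr2 θ).hasSum
    have hc : 0 ≤ 1 - cos (k * θ) := by linarith [cos_le_one (k * θ)]
    rcases Nat.eq_zero_or_pos k with rfl | hk
    · simp
    · have hk0 : (0 : ℝ) < k := by exact_mod_cast hk
      have := (one_le_div hk0).2 (le_sigmaOne k)
      refine mul_le_mul_of_nonneg_right ?_ hc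
      exact le_mul_of_one_le_left (by positivity) this
  refine le_trans ?_ h
  have h3 : 0 < 1 - r := by linarith
  gcongr ?_ / (?_ * ?_)
  · have : (1 - t) * (2 - t) ≤ r * (1 + r) :=
      mul_le_mul hr1 (by linarith) (by linarith) hr0.le
    nlinarith
  · linarith
  · have : (1 - r) ^ 2 ≤ t ^ 2 := by gcongr; linarith
    nlinarith

theorem hasSum_succ_of_hasSum_of_zero {f : ℕ → ℝ} {a : ℝ} (h : HasSum f a) (h0 : f 0 = 0) :
    HasSum (fun k ↦ f (k + 1)) a := by
  rw [hasSum_nat_add_iff' 1 |>.symm] at h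
  simpa [h0] using h

/-- Rearrangement of a divisor sum as an iterated sum over multiples. -/
theorem hasSum_of_hasSum_sigmaOne_mul {u g : ℕ → ℝ} {a : ℝ} (hu : ∀ k, 0 ≤ u k)
    (ha : HasSum (fun k ↦ sigmaOne k * u k) a)
    (hg : ∀ m : ℕ, HasSum (fun d : ℕ ↦ (d : ℝ) * u ((m + 1) * d)) (g m)) : HasSum g a := by
  have ha' : HasSum (fun k : ℕ+ ↦ sigmaOne k * u k) a :=
    Equiv.pnatEquivNat.symm.hasSum_iff.1
      (hasSum_succ_of_hasSum_of_zero ha (by simp [sigmaOne_zero]))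
  let F : (Σ n : ℕ+, Nat.divisorsAntidiagonal n) → ℝ := fun x ↦ (x.2.1.2 : ℝ) * u x.1
  have hfib : ∀ n : ℕ+, HasSum (fun c ↦ F ⟨n, c⟩) (sigmaOne n * u n) := fun n ↦ by
    have h1 : ∑ c : Nat.divisorsAntidiagonal (n : ℕ), F ⟨n, c⟩ = sigmaOne n * u n := by
      simp only [F]
      rw [Finset.univ_eq_attach, Finset.sum_attach _ (fun c : ℕ × ℕ ↦ (c.2 : ℝ) * u n),
        ← Finset.sum_mul, sigmaOne,
        Nat.sum_divisorsAntidiagonal' (fun _ j : ℕ ↦ (j : ℝ))]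
    rw [← h1]
    exact hasSum_fintype _
  have hsF : Summable F := by
    refine (summable_sigma_of_nonneg fun x ↦ mul_nonneg (Nat.cast_nonneg _) (hu _)).2
      ⟨fun n ↦ (hfib n).summable, ?_⟩
    exact ha'.summable.congr fun n ↦ (hfib n).tsum_eq.symm
  have hF := sigmaAntidiagonalEquivProd.symm.hasSum_iff.2 (ha'.sigma_of_hasSum hfib hsF)
  have hF2 : HasSum (fun m : ℕ+ ↦ g (Equiv.pnatEquivNat m)) a := by
    refine hF.prod_fiberwise fun m ↦ ?_
    refine Equiv.pnatEquivNat.symm.hasSum_iff.1 ?_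
    have := hasSum_succ_of_hasSum_of_zero (hg (Equiv.pnatEquivNat m)) (by simp)
    refine this.congr_fun fun d ↦ ?_
    simp [F, sigmaAntidiagonalEquivProd, Equiv.pnatEquivNat]
  exact (Equiv.pnatEquivNat.symm.hasSum_iff.2 hF2).congr_fun fun m ↦ by simp

theorem factorial_mul_cast_choose (k d : ℕ) :
    (k.factorial : ℝ) * ((d + k).choose k : ℝ) = ((d + 1).ascFactorial k : ℝ) := by
  rw [Nat.ascFactorial_eq_factorial_mul_choose]
  push_cast
  rfl

theorem hasSum_pow_one_mul_geometric {q : ℝ} (hq : 0 ≤ q) (hq' : q < 1) :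
    HasSum (fun d : ℕ ↦ (d : ℝ) * q ^ d) (q / (1 - q) ^ 2) :=
  hasSum_coe_mul_geometric_of_norm_lt_one (by rwa [Real.norm_of_nonneg hq])

theorem hasSum_pow_two_mul_geometric {q : ℝ} (hq : 0 ≤ q) (hq' : q < 1) :
    HasSum (fun d : ℕ ↦ (d : ℝ) ^ 2 * q ^ d) (q * (1 + q) / (1 - q) ^ 3) := by
  have hn : ‖q‖ < 1 := by rwa [Real.norm_of_nonneg hq]
  have h := fun k ↦ hasSum_choose_mul_geometric_of_norm_lt_one k hn
  have h1 : 1 - q ≠ 0 := by linarith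
  convert! (((h 2).mul_left 2).sub ((h 1).mul_left 3)).add (h 0) using 1
  · funext d
    have h2 := factorial_mul_cast_choose 2 d
    simp [Nat.ascFactorial_succ, Nat.factorial] at h2 ⊢
    linear_combination -q ^ d * h2
  · field_simp
    ring

theorem hasSum_pow_three_mul_geometric {q : ℝ} (hq : 0 ≤ q) (hq' : q < 1) :
    HasSum (fun d : ℕ ↦ (d : ℝ) ^ 3 * q ^ d) (q * (1 + 4 * q + q ^ 2) / (1 - q) ^ 4) := by
  have hn : ‖q‖ < 1 := by rwa [Real.norm_of_nonneg hq]
  have h := fun k ↦ hasSum_choose_mul_geometric_of_norm_lt_one k hn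
  have h1 : 1 - q ≠ 0 := by linarith
  convert! ((((h 3).mul_left 6).sub ((h 2).mul_left 12)).add ((h 1).mul_left 7)).sub (h 0) using 1
  · funext d
    have h2 := factorial_mul_cast_choose 2 d
    have h3 := factorial_mul_cast_choose 3 d
    simp [Nat.ascFactorial_succ, Nat.factorial] at h2 h3 ⊢
    linear_combination q ^ d * (6 * h2 - h3)
  · field_simp
    ring

theorem hasSum_pow_four_mul_geometric {q : ℝ} (hq : 0 ≤ q) (hq' : q < 1) :
    HasSum (fun d : ℕ ↦ (d : ℝ) ^ 4 * q ^ d)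
      (q * (1 + q) * (1 + 10 * q + q ^ 2) / (1 - q) ^ 5) := by
  have hn : ‖q‖ < 1 := by rwa [Real.norm_of_nonneg hq]
  have h := fun k ↦ hasSum_choose_mul_geometric_of_norm_lt_one k hn
  have h1 : 1 - q ≠ 0 := by linarith
  convert! (((((h 4).mul_left 24).sub ((h 3).mul_left 60)).add ((h 2).mul_left 50)).sub
    ((h 1).mul_left 15)).add (h 0) using 1
  · funext d
    have h2 := factorial_mul_cast_choose 2 d
    have h3 := factorial_mul_cast_choose 3 d
    have h4 := factorial_mul_cast_choose 4 d
    simp [Nat.ascFactorial_succ, Nat.factorial] at h2 h3 h4 ⊢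
    linear_combination q ^ d * (-25 * h2 + 10 * h3 - h4)
  · field_simp
    ring

theorem hasSum_eulerKappa_of_hasSum {j : ℕ} {r : ℝ} (hr : 0 ≤ r) (hr' : r < 1) {g : ℕ → ℝ}
    (hg : ∀ m : ℕ, HasSum (fun d : ℕ ↦ (d : ℝ) ^ (j + 1) * (r ^ (m + 1)) ^ d) (g m)) :
    HasSum (fun m : ℕ ↦ ((m : ℝ) + 1) ^ j * g m) (eulerKappa j r) := by
  refine hasSum_of_hasSum_sigmaOne_mul (u := fun k ↦ (k : ℝ) ^ j * r ^ k) (fun k ↦ by positivity)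
    ((summable_sigmaOne_mul_pow hr hr' j).hasSum.congr_fun fun k ↦ (mul_assoc _ _ _).symm)
    fun m ↦ ((hg m).mul_left _).congr_fun fun d ↦ ?_
  push_cast
  rw [pow_mul, mul_pow]
  ring

theorem hasSum_eulerG {r : ℝ} (hr : 0 ≤ r) (hr' : r < 1) :
    HasSum (fun m : ℕ ↦ 1 / ((m : ℝ) + 1) * (r ^ (m + 1) / (1 - r ^ (m + 1)))) (eulerG r) := by
  refine hasSum_of_hasSum_sigmaOne_mul (u := fun k ↦ (k : ℝ)⁻¹ * r ^ k) (fun k ↦ by positivity)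
    ((summable_sigmaOne_div_mul_pow hr hr').hasSum.congr_fun fun k ↦ by ring)
    fun m ↦ ?_
  have hq : r ^ (m + 1) < 1 := pow_lt_one₀ hr hr' (by omega)
  have h1 := (hasSum_geometric_of_lt_one (by positivity) hq).sub (hasSum_ite_eq (0 : ℕ) (1 : ℝ))
  have h2 := h1.mul_left (1 / ((m : ℝ) + 1))
  have h3 : 1 - r ^ (m + 1) ≠ 0 := by linarith
  rw [show (1 - r ^ (m + 1))⁻¹ - 1 = r ^ (m + 1) / (1 - r ^ (m + 1)) by field_simp; ring] at h2
  refine h2.congr_fun fun d ↦ ?_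
  rcases Nat.eq_zero_or_pos d with rfl | hd
  · simp
  · have : (d : ℝ) ≠ 0 := by positivity
    rw [if_neg hd.ne', pow_mul]
    push_cast
    field_simp
    ring

/-- The function `exp x + exp (-x) - 2`. -/
noncomputable def coshGap (x : ℝ) : ℝ := rexp x + rexp (-x) - 2

theorem one_sub_exp_neg_sq (x : ℝ) : (1 - rexp (-x)) ^ 2 = rexp (-x) * coshGap x := by
  have h : rexp (-x) * rexp x = 1 := by rw [← exp_add]; simp
  rw [coshGap]
  linear_combination -h

theorem poly_le_coshGap (x : ℝ) : x ^ 2 + x ^ 4 / 12 + x ^ 6 / 360 + x ^ 8 / 20160 +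
    x ^ 10 / 1814400 ≤ coshGap x := by
  have h := sum_le_hasSum (Finset.range 6) (fun n _ ↦ by rw [pow_mul]; positivity) (hasSum_cosh x)
  rw [cosh_eq] at h
  simp [Finset.sum_range_succ, Nat.factorial] at h
  rw [coshGap]
  linarith

theorem coshGap_le {x : ℝ} (hx : |x| ≤ 1) : coshGap x ≤ x ^ 2 * (1 + x ^ 2 / 3) := by
  have h := cosh_le_exp_half_sq x
  have h1 : x ^ 2 ≤ 1 := by rw [← sq_abs]; exact pow_le_one₀ (abs_nonneg x) hx
  have h2 := exp_bound' (x := x ^ 2 / 2) (by positivity) (by linarith) (n := 3) (by norm_num)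
  simp [Finset.sum_range_succ, Nat.factorial] at h2
  rw [cosh_eq] at h
  rw [coshGap]
  have h3 : (x ^ 2 / 2) ^ 3 ≤ (x ^ 2 / 2) ^ 2 / 2 := by
    rw [pow_succ]
    nlinarith [sq_nonneg (x ^ 2 / 2)]
  nlinarith

theorem coshGap_pos {x : ℝ} (hx : 0 < x) : 0 < coshGap x :=
  lt_of_lt_of_le (by positivity) (poly_le_coshGap x)

theorem geometric_one_eq {x : ℝ} (hx : 0 < x) :
    rexp (-x) / (1 - rexp (-x)) ^ 2 = 1 / coshGap x := by
  have := coshGap_pos hx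
  have := exp_pos (-x)
  rw [one_sub_exp_neg_sq]
  field_simp

theorem geometric_one_le {x : ℝ} (hx : 0 < x) :
    rexp (-x) / (1 - rexp (-x)) ^ 2 ≤ 1 / x ^ 2 := by
  rw [geometric_one_eq hx]
  gcongr
  refine le_trans ?_ (poly_le_coshGap x)
  have : 0 ≤ x ^ 4 / 12 + x ^ 6 / 360 + x ^ 8 / 20160 + x ^ 10 / 1814400 := by positivity
  linarith

theorem le_geometric_one {x : ℝ} (hx : 0 < x) (hx' : x ≤ 1) :
    1 / x ^ 2 - 1 / 3 ≤ rexp (-x) / (1 - rexp (-x)) ^ 2 := by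
  rw [geometric_one_eq hx, le_div_iff₀ (coshGap_pos hx)]
  have h := coshGap_le (x := x) (by rwa [abs_of_pos hx])
  have h1 : 0 ≤ 1 / x ^ 2 - 1 / 3 := by
    rw [sub_nonneg]
    exact one_div_le_one_div_of_le (by positivity) (by nlinarith)
  calc _ ≤ (1 / x ^ 2 - 1 / 3) * (x ^ 2 * (1 + x ^ 2 / 3)) := by gcongr
    _ = 1 - x ^ 4 / 9 := by field_simp; ring
    _ ≤ 1 := by linarith [pow_pos hx 4]

theorem geometric_two_sq {x : ℝ} (hx : 0 < x) :
    (rexp (-x) * (1 + rexp (-x)) / (1 - rexp (-x)) ^ 3) ^ 2 =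
      (4 + coshGap x) / coshGap x ^ 3 := by
  have h0 := coshGap_pos hx
  have h1 := exp_pos (-x)
  have h := one_sub_exp_neg_sq x
  have h2 : (1 + rexp (-x)) ^ 2 = rexp (-x) * (4 + coshGap x) := by linear_combination h
  rw [div_pow, mul_pow, ← pow_mul, show 3 * 2 = 2 * 3 by norm_num, pow_mul _ 2 3, h, h2]
  field_simp

theorem geometric_two_le {x : ℝ} (hx : 0 < x) :
    rexp (-x) * (1 + rexp (-x)) / (1 - rexp (-x)) ^ 3 ≤ 2 / x ^ 3 := by
  refine le_of_sq_le_sq ?_ (by positivity)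
  rw [geometric_two_sq hx, div_pow, div_le_div_iff₀ (by have := coshGap_pos hx; positivity)
    (by positivity)]
  obtain ⟨δ, hδ, h⟩ : ∃ δ : ℝ, 0 ≤ δ ∧ coshGap x = x ^ 2 + x ^ 4 / 12 + δ :=
    ⟨coshGap x - (x ^ 2 + x ^ 4 / 12), by
      have := poly_le_coshGap x
      have : 0 ≤ x ^ 6 / 360 + x ^ 8 / 20160 + x ^ 10 / 1814400 := by positivity
      linarith, by ring⟩
  rw [h, ← sub_nonneg]
  ring_nf
  positivity

theorem le_geometric_two {x : ℝ} (hx : 0 < x) (hx' : x ≤ 1) :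
    2 / x ^ 3 * (1 - x ^ 2 / 2) ≤ rexp (-x) * (1 + rexp (-x)) / (1 - rexp (-x)) ^ 3 := by
  have hq : rexp (-x) < 1 := by rw [exp_lt_one_iff]; linarith
  have h1 : 0 < 1 - rexp (-x) := by linarith
  have h2 := exp_pos (-x)
  refine le_of_sq_le_sq ?_ (by positivity)
  have hE := coshGap_pos hx
  rw [geometric_two_sq hx, le_div_iff₀ (by positivity)]
  have h := coshGap_le (x := x) (by rwa [abs_of_pos hx])
  calc (2 / x ^ 3 * (1 - x ^ 2 / 2)) ^ 2 * coshGap x ^ 3 ≤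
      (2 / x ^ 3 * (1 - x ^ 2 / 2)) ^ 2 * (x ^ 2 * (1 + x ^ 2 / 3)) ^ 3 := by gcongr
    _ = 4 * ((1 - x ^ 2 / 2) ^ 2 * (1 + x ^ 2 / 3) ^ 3) := by field_simp; ring
    _ ≤ 4 * 1 := by
      gcongr
      have hw : x ^ 2 ≤ 1 := by nlinarith
      have hw0 : 0 ≤ x ^ 2 := by positivity
      generalize x ^ 2 = w at hw hw0
      nlinarith [mul_nonneg hw0 hw0, mul_nonneg (mul_nonneg hw0 hw0) hw0,
        mul_nonneg (mul_nonneg hw0 hw0) (sub_nonneg.2 hw),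
        mul_nonneg (mul_nonneg (mul_nonneg hw0 hw0) hw0) (sub_nonneg.2 hw),
        mul_nonneg (mul_nonneg (mul_nonneg (mul_nonneg hw0 hw0) hw0) hw0) (sub_nonneg.2 hw)]
    _ ≤ 4 + coshGap x := by linarith

theorem geometric_three_le {x : ℝ} (hx : 0 < x) :
    rexp (-x) * (1 + 4 * rexp (-x) + rexp (-x) ^ 2) / (1 - rexp (-x)) ^ 4 ≤ 6.2 / x ^ 4 := by
  have h0 := coshGap_pos hx
  have h1 := exp_pos (-x)
  have h := one_sub_exp_neg_sq x
  have h2 : 1 + 4 * rexp (-x) + rexp (-x) ^ 2 = rexp (-x) * (6 + coshGap x) := by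
    linear_combination h
  have h3 : rexp (-x) * (1 + 4 * rexp (-x) + rexp (-x) ^ 2) / (1 - rexp (-x)) ^ 4 =
      (6 + coshGap x) / coshGap x ^ 2 := by
    rw [show (1 - rexp (-x)) ^ 4 = ((1 - rexp (-x)) ^ 2) ^ 2 by ring, h, h2]
    field_simp
  rw [h3, div_le_div_iff₀ (by positivity) (by positivity)]
  obtain ⟨δ, hδ, h⟩ : ∃ δ : ℝ, 0 ≤ δ ∧
      coshGap x = x ^ 2 + x ^ 4 / 12 + x ^ 6 / 360 + x ^ 8 / 20160 + δ :=
    ⟨coshGap x - (x ^ 2 + x ^ 4 / 12 + x ^ 6 / 360 + x ^ 8 / 20160), by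
      have := poly_le_coshGap x
      have : 0 ≤ x ^ 10 / 1814400 := by positivity
      linarith, by ring⟩
  rw [h, ← sub_nonneg]
  have h4 : 0 ≤ x ^ 4 * (0.0005 * x ^ 2 * (x ^ 2 - 6) ^ 2) := by positivity
  refine le_trans h4 ?_
  rw [← sub_nonneg]
  ring_nf
  positivity

theorem geometric_four_le {x : ℝ} (hx : 0 < x) :
    rexp (-x) * (1 + rexp (-x)) * (1 + 10 * rexp (-x) + rexp (-x) ^ 2) / (1 - rexp (-x)) ^ 5 ≤
      26 / x ^ 5 := by
  have h0 := coshGap_pos hx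
  have h1 := exp_pos (-x)
  have h := one_sub_exp_neg_sq x
  have h2 : (1 + rexp (-x)) ^ 2 = rexp (-x) * (4 + coshGap x) := by linear_combination h
  have h3 : 1 + 10 * rexp (-x) + rexp (-x) ^ 2 = rexp (-x) * (12 + coshGap x) := by
    linear_combination h
  refine le_of_sq_le_sq ?_ (by positivity)
  have h4 : (rexp (-x) * (1 + rexp (-x)) * (1 + 10 * rexp (-x) + rexp (-x) ^ 2) /
      (1 - rexp (-x)) ^ 5) ^ 2 = (4 + coshGap x) * (12 + coshGap x) ^ 2 / coshGap x ^ 5 := by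
    rw [div_pow, mul_pow, mul_pow, ← pow_mul, show 5 * 2 = 2 * 5 by norm_num, pow_mul _ 2 5, h, h2,
      h3]
    field_simp
  rw [h4, div_pow, div_le_div_iff₀ (by positivity) (by positivity)]
  obtain ⟨δ, hδ, h⟩ : ∃ δ : ℝ, 0 ≤ δ ∧ coshGap x = x ^ 2 + x ^ 4 / 12 + x ^ 6 / 360 +
      x ^ 8 / 20160 + x ^ 10 / 1814400 + δ := ⟨_, sub_nonneg.2 (poly_le_coshGap x), by ring⟩
  rw [h, ← sub_nonneg]
  ring_nf
  positivity

theorem hasSum_one_div_succ_sq : HasSum (fun m : ℕ ↦ 1 / ((m : ℝ) + 1) ^ 2) (π ^ 2 / 6) := by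
  have h := hasSum_succ_of_hasSum_of_zero hasSum_zeta_two (by simp)
  simpa using h

theorem pi_sq_div_six_sub_le {M : ℕ} (hM : M ≠ 0) :
    π ^ 2 / 6 - 1 / M ≤ ∑ m ∈ Finset.range M, 1 / ((m : ℝ) + 1) ^ 2 := by
  suffices h : π ^ 2 / 6 ≤ ∑ m ∈ Finset.range M, 1 / ((m : ℝ) + 1) ^ 2 + 1 / M by linarith
  refine le_of_tendsto hasSum_one_div_succ_sq.tendsto_sum_nat ?_
  filter_upwards [Filter.eventually_ge_atTop M] with N hN
  suffices h : ∑ m ∈ Finset.range N, 1 / ((m : ℝ) + 1) ^ 2 + 1 / (N : ℝ) ≤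
      ∑ m ∈ Finset.range M, 1 / ((m : ℝ) + 1) ^ 2 + 1 / (M : ℝ) by
    have : (0 : ℝ) ≤ 1 / N := by positivity
    linarith
  induction N, hN using Nat.le_induction with
  | base => rfl
  | succ k hk ih =>
    refine le_trans ?_ ih
    have hk0 : (0 : ℝ) < k := by exact_mod_cast (Nat.pos_of_ne_zero hM).trans_le hk
    rw [Finset.sum_range_succ]
    push_cast
    have : 1 / ((k : ℝ) + 1) ^ 2 + 1 / ((k : ℝ) + 1) ≤ 1 / k := by
      rw [div_add_div _ _ (by positivity) (by positivity), div_le_div_iff₀ (by positivity) hk0]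
      nlinarith [mul_pos hk0 hk0, mul_pos (mul_pos hk0 hk0) hk0]
    linarith

theorem exp_neg_pow_succ (t : ℝ) (m : ℕ) : rexp (-t) ^ (m + 1) = rexp (-(((m : ℝ) + 1) * t)) := by
  rw [← exp_nat_mul]
  push_cast
  ring_nf

section
variable {t : ℝ}

theorem hasSum_eulerKappa_zero (ht : 0 < t) : HasSum (fun m : ℕ ↦
    rexp (-(((m : ℝ) + 1) * t)) / (1 - rexp (-(((m : ℝ) + 1) * t))) ^ 2)
    (eulerKappa 0 (rexp (-t))) := by
  have hr : rexp (-t) < 1 := by rw [exp_lt_one_iff]; linarith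
  refine (hasSum_eulerKappa_of_hasSum (exp_pos _).le hr (g := fun m ↦
    rexp (-(((m : ℝ) + 1) * t)) / (1 - rexp (-(((m : ℝ) + 1) * t))) ^ 2) fun m ↦ ?_).congr_fun
    fun m ↦ ?_
  · rw [← exp_neg_pow_succ]
    simpa using hasSum_pow_one_mul_geometric (pow_nonneg (exp_pos (-t)).le (m + 1))
      (pow_lt_one₀ (exp_pos _).le hr (by omega))
  · simp

theorem hasSum_eulerKappa_one (ht : 0 < t) : HasSum (fun m : ℕ ↦ ((m : ℝ) + 1) *
    (rexp (-(((m : ℝ) + 1) * t)) * (1 + rexp (-(((m : ℝ) + 1) * t))) /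
      (1 - rexp (-(((m : ℝ) + 1) * t))) ^ 3)) (eulerKappa 1 (rexp (-t))) := by
  have hr : rexp (-t) < 1 := by rw [exp_lt_one_iff]; linarith
  refine (hasSum_eulerKappa_of_hasSum (exp_pos _).le hr fun m ↦
    hasSum_pow_two_mul_geometric (pow_nonneg (exp_pos (-t)).le (m + 1))
      (pow_lt_one₀ (exp_pos _).le hr (by omega))).congr_fun fun m ↦ ?_
  rw [exp_neg_pow_succ]
  simp

theorem eulerKappa_zero_le (ht : 0 < t) : eulerKappa 0 (rexp (-t)) ≤ π ^ 2 / 6 / t ^ 2 := by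
  refine hasSum_le (fun m ↦ ?_) (hasSum_eulerKappa_zero ht) (hasSum_one_div_succ_sq.div_const _)
  refine (geometric_one_le (by positivity)).trans_eq ?_
  rw [mul_pow, div_div]

theorem eulerKappa_one_le (ht : 0 < t) : eulerKappa 1 (rexp (-t)) ≤ π ^ 2 / 3 / t ^ 3 := by
  have h := (hasSum_one_div_succ_sq.mul_left 2).div_const (t ^ 3)
  rw [show 2 * (π ^ 2 / 6) = π ^ 2 / 3 by ring] at h
  refine hasSum_le (fun m ↦ ?_) (hasSum_eulerKappa_one ht) h
  calc _ ≤ ((m : ℝ) + 1) * (2 / (((m : ℝ) + 1) * t) ^ 3) := by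
        exact mul_le_mul_of_nonneg_left (geometric_two_le (by positivity)) (by positivity)
    _ = _ := by field_simp

theorem eulerKappa_two_le (ht : 0 < t) :
    eulerKappa 2 (rexp (-t)) ≤ 6.2 * (π ^ 2 / 6) / t ^ 4 := by
  have hr : rexp (-t) < 1 := by rw [exp_lt_one_iff]; linarith
  refine hasSum_le (fun m ↦ ?_) (hasSum_eulerKappa_of_hasSum (exp_pos _).le hr fun m ↦
    hasSum_pow_three_mul_geometric (pow_nonneg (exp_pos (-t)).le (m + 1))
      (pow_lt_one₀ (exp_pos _).le hr (by omega)))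
    ((hasSum_one_div_succ_sq.mul_left 6.2).div_const (t ^ 4))
  rw [exp_neg_pow_succ]
  calc _ ≤ ((m : ℝ) + 1) ^ 2 * (6.2 / (((m : ℝ) + 1) * t) ^ 4) := by
        exact mul_le_mul_of_nonneg_left (geometric_three_le (by positivity)) (by positivity)
    _ = _ := by field_simp

theorem eulerKappa_three_le (ht : 0 < t) :
    eulerKappa 3 (rexp (-t)) ≤ 26 * (π ^ 2 / 6) / t ^ 5 := by
  have hr : rexp (-t) < 1 := by rw [exp_lt_one_iff]; linarith
  refine hasSum_le (fun m ↦ ?_) (hasSum_eulerKappa_of_hasSum (exp_pos _).le hr fun m ↦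
    hasSum_pow_four_mul_geometric (pow_nonneg (exp_pos (-t)).le (m + 1))
      (pow_lt_one₀ (exp_pos _).le hr (by omega)))
    ((hasSum_one_div_succ_sq.mul_left 26).div_const (t ^ 5))
  rw [exp_neg_pow_succ]
  calc _ ≤ ((m : ℝ) + 1) ^ 3 * (26 / (((m : ℝ) + 1) * t) ^ 5) := by
        exact mul_le_mul_of_nonneg_left (geometric_four_le (by positivity)) (by positivity)
    _ = _ := by field_simp

theorem one_sub_exp_neg_pos {x : ℝ} (hx : 0 < x) : 0 < 1 - rexp (-x) := by
  rw [sub_pos, exp_lt_one_iff]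
  linarith

theorem le_eulerKappa_one (ht : 0 < t) (ht' : t ≤ 1 / 70) :
    3.15 / t ^ 3 ≤ eulerKappa 1 (rexp (-t)) := by
  refine le_trans ?_ (sum_le_hasSum (Finset.range 16) (fun m _ ↦ ?_) (hasSum_eulerKappa_one ht))
  · calc 3.15 / t ^ 3 ≤ 2 / t ^ 3 * ∑ m ∈ Finset.range 16,
            (1 / ((m : ℝ) + 1) ^ 2 - (1 / 70) ^ 2 / 2) := by
          rw [div_mul_eq_mul_div]
          gcongr
          norm_num [Finset.sum_range_succ]
      _ ≤ _ := by
          rw [Finset.mul_sum]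
          refine Finset.sum_le_sum fun m hm ↦ ?_
          have hm' : (m : ℝ) + 1 ≤ 16 := by exact_mod_cast Finset.mem_range.1 hm
          have hx : ((m : ℝ) + 1) * t ≤ 1 := by nlinarith
          calc 2 / t ^ 3 * (1 / ((m : ℝ) + 1) ^ 2 - (1 / 70) ^ 2 / 2) ≤
              2 / t ^ 3 * (1 / ((m : ℝ) + 1) ^ 2 - t ^ 2 / 2) := by gcongr
            _ = ((m : ℝ) + 1) *
                (2 / (((m : ℝ) + 1) * t) ^ 3 * (1 - (((m : ℝ) + 1) * t) ^ 2 / 2)) := by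
              field_simp
            _ ≤ _ := by
              gcongr
              exact le_geometric_two (by positivity) hx
  · have := one_sub_exp_neg_pos (x := ((m : ℝ) + 1) * t) (by positivity)
    positivity

theorem le_eulerKappa_zero (ht : 0 < t) (ht' : t ≤ 1 / 70) :
    π ^ 2 / 6 / t ^ 2 - 1.35 / t ≤ eulerKappa 0 (rexp (-t)) := by
  obtain ⟨M, hM⟩ : ∃ M : ℕ, M = ⌊1 / t⌋₊ := ⟨_, rfl⟩
  have hM1 : (M : ℝ) ≤ 1 / t := hM ▸ Nat.floor_le (by positivity)
  have hM2 : 1 / t < M + 1 := hM ▸ Nat.lt_floor_add_one _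
  have h70 : 70 ≤ 1 / t := by rw [le_div_iff₀ ht]; linarith
  have hM0 : (0 : ℝ) < M := by linarith
  refine le_trans ?_ (sum_le_hasSum (Finset.range M) (fun m _ ↦ ?_) (hasSum_eulerKappa_zero ht))
  · calc π ^ 2 / 6 / t ^ 2 - 1.35 / t ≤ (π ^ 2 / 6 - 1 / M) / t ^ 2 - M / 3 := by
          have h1 : 1 / (M : ℝ) ≤ 70 / 69 * t := by
            rw [div_le_iff₀ hM0]
            have : 1 / t * t = 1 := by field_simp
            nlinarith
          have h2 : 1 / (M : ℝ) / t ^ 2 ≤ 70 / 69 * t / t ^ 2 := by gcongr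
          have h3 : 70 / 69 * t / t ^ 2 = 70 / 69 * (1 / t) := by field_simp
          rw [sub_div, show 1.35 / t = 1.35 * (1 / t) by ring]
          linarith
      _ ≤ (∑ m ∈ Finset.range M, 1 / ((m : ℝ) + 1) ^ 2) / t ^ 2 - M / 3 := by
          gcongr
          exact pi_sq_div_six_sub_le (by exact_mod_cast hM0.ne')
      _ = ∑ m ∈ Finset.range M, (1 / (((m : ℝ) + 1) * t) ^ 2 - 1 / 3) := by
          rw [Finset.sum_sub_distrib, Finset.sum_div]
          congr 1
          · refine Finset.sum_congr rfl fun m _ ↦ ?_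
            rw [mul_pow, div_div]
          · simp; ring
      _ ≤ _ := by
          refine Finset.sum_le_sum fun m hm ↦ le_geometric_one (by positivity) ?_
          have hm' : (m : ℝ) + 1 ≤ M := by exact_mod_cast Finset.mem_range.1 hm
          calc ((m : ℝ) + 1) * t ≤ 1 / t * t := by gcongr; linarith
            _ = 1 := by field_simp
  · have := one_sub_exp_neg_pos (x := ((m : ℝ) + 1) * t) (by positivity)
    positivity

theorem bose_eq {x : ℝ} (hx : 0 < x) : rexp (-x) / (1 - rexp (-x)) = 1 / (rexp x - 1) := by
  have h1 : 0 < rexp x - 1 := by rw [sub_pos, one_lt_exp_iff]; exact hx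
  have h2 := one_sub_exp_neg_pos hx
  have h : rexp (-x) * rexp x = 1 := by rw [← exp_add]; simp
  rw [div_eq_div_iff h2.ne' h1.ne']
  linear_combination h

theorem bose_le {x : ℝ} (hx : 0 < x) : rexp (-x) / (1 - rexp (-x)) ≤ 1 / x := by
  rw [bose_eq hx]
  gcongr
  linarith [add_one_le_exp x]

theorem bose_le_sub_half {x : ℝ} (hx : 0 < x) :
    rexp (-x) / (1 - rexp (-x)) ≤ 1 / x - 1 / 2 + x / 8 := by
  have h := sum_le_exp_of_nonneg hx.le 4
  simp [Finset.sum_range_succ, Nat.factorial] at h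
  have h1 : x * (1 + x / 2 + x ^ 2 / 6) ≤ rexp x - 1 := by nlinarith
  have h2 : 0 < 1 - x / 2 + x ^ 2 / 8 := by nlinarith [sq_nonneg (x - 2)]
  rw [bose_eq hx]
  calc 1 / (rexp x - 1) ≤ 1 / (x * (1 + x / 2 + x ^ 2 / 6)) := by gcongr
    _ ≤ (1 - x / 2 + x ^ 2 / 8) / x := by
      rw [div_le_div_iff₀ (by positivity) hx]
      nlinarith [mul_nonneg (pow_nonneg hx.le 3) (by nlinarith [sq_nonneg (x - 1)] :
        0 ≤ 1 / 24 - x / 48 + x ^ 2 / 48)]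
    _ = _ := by field_simp

theorem hasSum_eulerG_exp (ht : 0 < t) : HasSum (fun m : ℕ ↦ 1 / ((m : ℝ) + 1) *
    (rexp (-(((m : ℝ) + 1) * t)) / (1 - rexp (-(((m : ℝ) + 1) * t))))) (eulerG (rexp (-t))) := by
  refine (hasSum_eulerG (exp_pos _).le (by rw [exp_lt_one_iff]; linarith)).congr_fun fun m ↦ ?_
  rw [exp_neg_pow_succ]

theorem eulerG_le (ht : 0 < t) : eulerG (rexp (-t)) ≤ π ^ 2 / 6 / t := by
  refine hasSum_le (fun m ↦ ?_) (hasSum_eulerG_exp ht) (hasSum_one_div_succ_sq.div_const t)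
  calc _ ≤ 1 / ((m : ℝ) + 1) * (1 / (((m : ℝ) + 1) * t)) := by
        exact mul_le_mul_of_nonneg_left (bose_le (by positivity)) (by positivity)
    _ = _ := by field_simp

theorem eulerG_le_sub_log (ht : 0 < t) :
    eulerG (rexp (-t)) ≤ π ^ 2 / 6 / t - 1 / 2 * log (4 / t) + 1 / 2 := by
  obtain ⟨M, hM⟩ : ∃ M : ℕ, M = ⌊4 / t⌋₊ := ⟨_, rfl⟩
  have hM1 : (M : ℝ) ≤ 4 / t := hM ▸ Nat.floor_le (by positivity)
  have hM2 : 4 / t < M + 1 := hM ▸ Nat.lt_floor_add_one _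
  have hfin := hasSum_sum_of_ne_finset_zero (f := fun m : ℕ ↦
    if m ∈ Finset.range M then 1 / 2 * (1 / ((m : ℝ) + 1)) - t / 8 else 0) (s := Finset.range M)
    (L := .unconditional ℕ)
    fun m hm ↦ if_neg hm
  have hle := hasSum_le (fun m ↦ ?_) (hasSum_eulerG_exp ht)
    ((hasSum_one_div_succ_sq.div_const t).sub hfin)
  · rw [Finset.sum_congr rfl fun m hm ↦ if_pos hm, Finset.sum_sub_distrib, ← Finset.mul_sum] at hle
    have hlog : log (4 / t) ≤ ∑ m ∈ Finset.range M, 1 / ((m : ℝ) + 1) := by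
      have h := log_add_one_le_harmonic M
      rw [harmonic] at h
      push_cast at h
      simp only [one_div]
      refine le_trans (log_le_log (by positivity) hM2.le) ?_
      exact_mod_cast h
    simp only [Finset.sum_const, Finset.card_range, nsmul_eq_mul] at hle
    have hMt : M * (t / 8) ≤ 1 / 2 := by
      calc M * (t / 8) ≤ 4 / t * (t / 8) := by gcongr
        _ = 1 / 2 := by field_simp; norm_num
    linarith
  · split_ifs
    · calc _ ≤ 1 / ((m : ℝ) + 1) *
            (1 / (((m : ℝ) + 1) * t) - 1 / 2 + ((m : ℝ) + 1) * t / 8) := by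
            exact mul_le_mul_of_nonneg_left (bose_le_sub_half (by positivity)) (by positivity)
        _ = _ := by field_simp; ring
    · calc _ ≤ 1 / ((m : ℝ) + 1) * (1 / (((m : ℝ) + 1) * t)) := by
            exact mul_le_mul_of_nonneg_left (bose_le (by positivity)) (by positivity)
        _ = _ := by field_simp; ring

end

theorem continuousOn_eulerKappa {j : ℕ} {b : ℝ} (hb : 0 ≤ b) (hb' : b < 1) :
    ContinuousOn (eulerKappa j) (Set.Icc 0 b) := by
  refine continuousOn_tsum (fun k ↦ by fun_prop) (summable_sigmaOne_mul_pow hb hb' j)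
    fun k x hx ↦ ?_
  have := sigmaOne_nonneg k
  have := hx.1
  rw [Real.norm_of_nonneg (by positivity)]
  gcongr
  exact hx.2

theorem exists_eulerKappa_zero_eq {n : ℕ} (hn : 8194 ≤ n) :
    ∃ t, 0 < t ∧ t ≤ 1 / 70 ∧ eulerKappa 0 (rexp (-t)) = n := by
  have hN : (8194 : ℝ) ≤ n := by exact_mod_cast hn
  have hb : rexp (-(1 / (n : ℝ))) < 1 := by
    rw [exp_lt_one_iff, neg_lt_zero]
    positivity
  have h0 : eulerKappa 0 0 = 0 := by
    rw [eulerKappa]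
    refine (tsum_congr fun k ↦ ?_).trans tsum_zero
    rcases Nat.eq_zero_or_pos k with rfl | hk
    · simp [sigmaOne_zero]
    · simp [hk.ne']
  have h1 : (n : ℝ) ≤ eulerKappa 0 (rexp (-(1 / (n : ℝ)))) := by
    refine le_trans ?_ (le_eulerKappa_zero (by positivity) ?_)
    · have : (n : ℝ) ≠ 0 := by positivity
      have h2 : π ^ 2 / 6 / (1 / (n : ℝ)) ^ 2 - 1.35 / (1 / (n : ℝ)) =
        π ^ 2 / 6 * n ^ 2 - 1.35 * n := by field_simp
      rw [h2]
      have := pi_gt_three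
      have : 1 ≤ π ^ 2 / 6 := by nlinarith
      nlinarith
    · gcongr
      linarith
  obtain ⟨r, hr, hrn⟩ := intermediate_value_Icc (exp_pos _).le
    (continuousOn_eulerKappa (j := 0) (exp_pos _).le hb) ⟨h0.trans_le (Nat.cast_nonneg n), h1⟩
  have hr0 : 0 < r := lt_of_le_of_ne hr.1 fun h ↦ by
    rw [← h, h0] at hrn
    linarith
  have hr1 : r < 1 := hr.2.trans_lt hb
  have ht : 0 < -log r := by linarith [log_neg hr0 hr1]
  have hrt : rexp (- -log r) = r := by rw [neg_neg, exp_log hr0]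
  refine ⟨-log r, ht, ?_, by rw [hrt, hrn]⟩
  have h3 := eulerKappa_zero_le ht
  rw [hrt, hrn, le_div_iff₀ (by positivity)] at h3
  have := pi_lt_d4
  have := pi_pos
  by_contra! h4
  nlinarith

set_option exponentiation.threshold 400 in
theorem card_partition_lt_two_pow {n : ℕ} (hn : n < 8195) :
    Fintype.card (Nat.Partition n) < 2 ^ 340 := by
  have h := p_mul_pow_le (r := rexp (-(1 / 70))) (exp_pos _) (by rw [exp_lt_one_iff]; norm_num) n
  have hG := eulerG_le (t := 1 / 70) (by norm_num)
  have hn' : (n : ℝ) ≤ 8194 := by exact_mod_cast Nat.lt_succ_iff.1 hn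
  suffices h : (p n : ℝ) < 2 ^ 340 by
    rw [p] at h
    exact_mod_cast h
  rw [← exp_nat_mul, ← le_div_iff₀ (exp_pos _), ← exp_sub] at h
  refine h.trans_lt ?_
  have h2 : (2 : ℝ) ^ 340 = rexp (340 * log 2) := by
    rw [mul_comm, exp_mul, exp_log (by norm_num)]
    norm_cast
  rw [h2, exp_lt_exp]
  have := log_two_gt_d9
  have := pi_lt_d4
  have := pi_pos
  nlinarith

theorem le_eulerR_of_far {t θ : ℝ} (ht : 0 < t) (ht' : t ≤ 1 / 70) (hθ : 0.8 * t ≤ θ)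
    (hθ' : θ ≤ π) : 0.38 / t ≤ eulerR (rexp (-t)) θ := by
  refine le_trans ?_ (geometric_le_eulerR ht (by linarith) θ)
  have hc : cos θ ≤ cos (0.8 * t) := cos_le_cos_of_nonneg_of_le_pi (by positivity) hθ' hθ
  have hq := cos_le_quartic (0.8 * t)
  obtain ⟨s, hs⟩ : ∃ s, s = 1 - cos θ := ⟨_, rfl⟩
  have hs1 : 0.3199 * t ^ 2 ≤ s := by
    have : t ^ 2 ≤ (1 / 70) ^ 2 := by gcongr
    nlinarith [sq_nonneg t]
  rw [← hs, div_le_div_iff₀ ht (by nlinarith [sq_nonneg t, mul_pos ht ht])]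
  have h0 : 0 ≤ s := le_trans (by positivity) hs1
  have h1 : 1.957 ≤ (1 - t) * (2 - t) := by nlinarith
  have h2 : 0.38 * (t ^ 2 + 2 * s) ≤ 1.957 * s := by nlinarith
  have h3 : 0.38 * (t ^ 2 + 2 * s) ≤ (1 - t) * (2 - t) * s := by nlinarith
  nlinarith

/-- The Gaussian majorant of the integrand in the intermediate range. -/
noncomputable def midGaussian (t θ : ℝ) : ℝ :=
  3 * rexp (-0.198 / t) * rexp (-(1 / (0.8 * t) ^ 2) * θ ^ 2)

theorem midGaussian_nonneg (t θ : ℝ) : 0 ≤ midGaussian t θ := by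
  unfold midGaussian
  positivity

theorem exp_neg_le_midGaussian {t θ x : ℝ} (ht : 0 < t) (h0 : 0 ≤ θ) (hθ : θ ≤ 0.8 * t)
    (hx : 0.198 / t ≤ x) : rexp (-x) ≤ midGaussian t θ := by
  have h1 : (1 / (0.8 * t) ^ 2) * θ ^ 2 ≤ 1 := by
    rw [one_div_mul_eq_div, div_le_one (by positivity)]
    gcongr
  have h2 : 1 ≤ 3 * rexp (-(1 / (0.8 * t) ^ 2) * θ ^ 2) := by
    have h3 : rexp (-1) ≤ rexp (-(1 / (0.8 * t) ^ 2) * θ ^ 2) := by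
      gcongr
      linarith
    have h4 : rexp (-1) * rexp 1 = 1 := by rw [← exp_add]; simp
    have := exp_one_lt_d9
    have := exp_pos (-1)
    nlinarith
  calc rexp (-x) ≤ rexp (-0.198 / t) := by
        gcongr
        rw [neg_div]
        linarith
    _ ≤ rexp (-0.198 / t) * (3 * rexp (-(1 / (0.8 * t) ^ 2) * θ ^ 2)) :=
        le_mul_of_one_le_right (exp_pos _).le h2
    _ = _ := by rw [midGaussian]; ring

theorem eulerR_cases {t θ : ℝ} (ht : 0 < t) (ht' : t ≤ 1 / 70) (h0 : 0 ≤ θ) (hθ : θ ≤ π) :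
    (0.4096 * eulerKappa 1 (rexp (-t)) * θ ^ 2 ≤ eulerR (rexp (-t)) θ) ∨
      (θ ≤ 0.8 * t ∧ 0.198 / t ≤ eulerR (rexp (-t)) θ) ∨ 0.38 / t ≤ eulerR (rexp (-t)) θ := by
  have hr : rexp (-t) < 1 := by rw [exp_lt_one_iff]; linarith
  have hR := le_eulerR (exp_pos (-t)).le hr θ
  have hk2 := le_eulerKappa_one ht ht'
  have hk4 := eulerKappa_three_le ht
  have hpi : π ^ 2 / 6 ≤ 1.64497 := by nlinarith [pi_lt_d4, pi_pos]
  have hk4' : eulerKappa 3 (rexp (-t)) ≤ 42.76922 / t ^ 5 := hk4.trans (by gcongr; linarith)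
  obtain ⟨x, hx⟩ : ∃ x, x = θ / t := ⟨_, rfl⟩
  have hθx : θ = x * t := by rw [hx]; field_simp
  have hx0 : 0 ≤ x := by rw [hx]; positivity
  rcases le_total (0.8 * t) θ with h | h
  · exact Or.inr (Or.inr (le_eulerR_of_far ht ht' h hθ))
  rcases le_total (0.39 * t) θ with h' | h'
  · refine Or.inr (Or.inl ⟨h, le_trans ?_ hR⟩)
    have hx1 : 0.39 ≤ x := by rw [hx, le_div_iff₀ ht]; exact h'
    have hx2 : x ≤ 0.8 := by rw [hx, div_le_iff₀ ht]; exact h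
    calc 0.198 / t ≤ (1.575 * x ^ 2 - 42.76922 / 24 * (x ^ 2) ^ 2) / t := by
          gcongr
          have h1 : 0.1521 ≤ x ^ 2 := by nlinarith
          have h2 : x ^ 2 ≤ 0.64 := by nlinarith
          nlinarith [mul_nonneg (sub_nonneg.2 h1) (sub_nonneg.2 h2)]
      _ = 3.15 / t ^ 3 * (θ ^ 2 / 2) - 42.76922 / t ^ 5 * (θ ^ 4 / 24) := by
          rw [hθx]; field_simp; ring
      _ ≤ _ := by gcongr
  · refine Or.inl (le_trans ?_ hR)
    have hx1 : x ≤ 0.39 := by rw [hx, div_le_iff₀ ht]; exact h'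
    have h1 : eulerKappa 3 (rexp (-t)) * (θ ^ 2 / 24) ≤ 0.0904 * eulerKappa 1 (rexp (-t)) := by
      calc _ ≤ 42.76922 / t ^ 5 * (θ ^ 2 / 24) := by gcongr
        _ = 42.76922 / 24 * x ^ 2 / t ^ 3 := by rw [hθx]; field_simp
        _ ≤ 0.0904 * 3.15 / t ^ 3 := by
          refine div_le_div_of_nonneg_right ?_ (by positivity)
          nlinarith
        _ = 0.0904 * (3.15 / t ^ 3) := by ring
        _ ≤ _ := by gcongr
    nlinarith [mul_le_mul_of_nonneg_right h1 (sq_nonneg θ)]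

section Majorants
variable {t θ : ℝ}

theorem exp_neg_le_exp_neg_eulerR (ht : 0 < t) (θ : ℝ) :
    rexp (-(eulerKappa 1 (rexp (-t)) / 2) * θ ^ 2) ≤ rexp (-eulerR (rexp (-t)) θ) := by
  gcongr
  have := eulerR_le (exp_pos (-t)).le (by rw [exp_lt_one_iff]; linarith) θ
  linarith

theorem exp_neg_eulerR_le (ht : 0 < t) (ht' : t ≤ 1 / 70) (h0 : 0 ≤ θ) (hθ : θ ≤ π) :
    rexp (-eulerR (rexp (-t)) θ) ≤ rexp (-(eulerKappa 1 (rexp (-t)) / 2) * θ ^ 2) +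
      eulerKappa 3 (rexp (-t)) / 24 *
        (θ ^ 4 * rexp (-(0.4096 * eulerKappa 1 (rexp (-t))) * θ ^ 2)) +
      midGaussian t θ + rexp (-0.38 / t) := by
  have hr : rexp (-t) < 1 := by rw [exp_lt_one_iff]; linarith
  have hR := le_eulerR (exp_pos (-t)).le hr θ
  have hk : 0 ≤ eulerKappa 3 (rexp (-t)) :=
    tsum_nonneg fun k ↦ by have := sigmaOne_nonneg k; positivity
  have hm := midGaussian_nonneg t θ
  have h1 := exp_pos (-(eulerKappa 1 (rexp (-t)) / 2) * θ ^ 2)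
  have h2 : 0 ≤ eulerKappa 3 (rexp (-t)) / 24 *
    (θ ^ 4 * rexp (-(0.4096 * eulerKappa 1 (rexp (-t))) * θ ^ 2)) := by positivity
  have h3 := exp_pos (-0.38 / t)
  obtain h | ⟨h, h'⟩ | h := eulerR_cases ht ht' h0 hθ
  · suffices h4 : rexp (-eulerR (rexp (-t)) θ) ≤ rexp (-(eulerKappa 1 (rexp (-t)) / 2) * θ ^ 2) +
        eulerKappa 3 (rexp (-t)) / 24 * θ ^ 4 * rexp (-eulerR (rexp (-t)) θ) by
      have h5 : rexp (-eulerR (rexp (-t)) θ) ≤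
          rexp (-(0.4096 * eulerKappa 1 (rexp (-t))) * θ ^ 2) := by
        gcongr
        linarith
      have h6 := mul_le_mul_of_nonneg_left h5 (a := eulerKappa 3 (rexp (-t)) / 24 * θ ^ 4)
        (by positivity)
      linarith
    have h4 := add_one_le_exp (-(eulerKappa 1 (rexp (-t)) / 2) * θ ^ 2 + eulerR (rexp (-t)) θ)
    have h5 : rexp (-(eulerKappa 1 (rexp (-t)) / 2) * θ ^ 2) =
        rexp (-(eulerKappa 1 (rexp (-t)) / 2) * θ ^ 2 + eulerR (rexp (-t)) θ) *
          rexp (-eulerR (rexp (-t)) θ) := by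
      rw [← exp_add]
      ring_nf
    have h6 := exp_pos (-eulerR (rexp (-t)) θ)
    rw [h5]
    nlinarith
  · have := exp_neg_le_midGaussian ht h0 h h'
    linarith
  · have : rexp (-eulerR (rexp (-t)) θ) ≤ rexp (-0.38 / t) := by
      gcongr
      rw [neg_div]
      linarith
    linarith

theorem exp_neg_eulerR_mul_le (ht : 0 < t) (ht' : t ≤ 1 / 70) (h0 : 0 ≤ θ) (hθ : θ ≤ π)
    {y a b c : ℝ} (hy : 0 ≤ y) (ha : y ≤ a) (hb : θ ≤ 0.8 * t → y ≤ b) (hb0 : 0 ≤ b)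
    (hc : y ≤ c) : rexp (-eulerR (rexp (-t)) θ) * y ≤
      a * rexp (-(0.4096 * eulerKappa 1 (rexp (-t))) * θ ^ 2) +
        b * midGaussian t θ + c * rexp (-0.38 / t) := by
  have hm := mul_nonneg hb0 (midGaussian_nonneg t θ)
  have h2 := mul_nonneg (hy.trans ha)
    (exp_pos (-(0.4096 * eulerKappa 1 (rexp (-t))) * θ ^ 2)).le
  have h3 := mul_nonneg (hy.trans hc) (exp_pos (-0.38 / t)).le
  obtain h | ⟨h, h'⟩ | h := eulerR_cases ht ht' h0 hθ
  · have h5 : rexp (-eulerR (rexp (-t)) θ) ≤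
        rexp (-(0.4096 * eulerKappa 1 (rexp (-t))) * θ ^ 2) := by
      gcongr
      linarith
    have := mul_le_mul h5 ha hy (exp_pos _).le
    linarith
  · have := mul_le_mul (exp_neg_le_midGaussian ht h0 h h') (hb h) hy (midGaussian_nonneg t θ)
    linarith
  · have h4 : rexp (-eulerR (rexp (-t)) θ) ≤ rexp (-0.38 / t) := by
      gcongr
      rw [neg_div]
      linarith
    have := mul_le_mul h4 hc hy (exp_pos _).le
    linarith

end Majorants

theorem integral_Ioi_pow_mul_exp_neg_mul_sq {b : ℝ} (hb : 0 < b) (k : ℕ) :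
    ∫ θ in Set.Ioi (0 : ℝ), θ ^ (2 * k) * rexp (-b * θ ^ 2) =
      (2 * k - 1 : ℕ).doubleFactorial / 2 ^ (k + 1) * √(π / b) / b ^ k := by
  have h := integral_rpow_mul_exp_neg_mul_rpow (p := 2) (q := 2 * k) (b := b) (by norm_num)
    (by have : (0 : ℝ) ≤ k := Nat.cast_nonneg k
        linarith) hb
  have h1 : ((2 * k : ℝ) + 1) / 2 = k + 1 / 2 := by ring
  rw [h1, Gamma_nat_add_half, show -(2 * k + 1 : ℝ) / 2 = -k - 1 / 2 by ring, rpow_sub hb,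
    rpow_neg hb.le, rpow_natCast,
    ← sqrt_eq_rpow] at h
  rw [sqrt_div pi_pos.le]
  have h2 : ∀ θ : ℝ, θ ^ (2 * k) * rexp (-b * θ ^ 2) =
      θ ^ (2 * k : ℝ) * rexp (-b * θ ^ (2 : ℝ)) := fun θ ↦ by
    norm_cast
  simp_rw [h2]
  rw [h, pow_succ]
  field_simp

theorem integrableOn_pow_mul_exp_neg_mul_sq {b : ℝ} (hb : 0 < b) (k : ℕ) :
    MeasureTheory.IntegrableOn (fun θ : ℝ ↦ θ ^ k * rexp (-b * θ ^ 2)) (Set.Ioi 0) := by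
  have h := integrableOn_rpow_mul_exp_neg_mul_sq (s := k) hb
    (by have : (0 : ℝ) ≤ k := Nat.cast_nonneg k
        linarith)
  simpa using h

theorem integral_pow_mul_exp_neg_mul_sq_le {b : ℝ} (hb : 0 < b) (k : ℕ) :
    ∫ θ in (0 : ℝ)..π, θ ^ (2 * k) * rexp (-b * θ ^ 2) ≤
      (2 * k - 1 : ℕ).doubleFactorial / 2 ^ (k + 1) * √(π / b) / b ^ k := by
  rw [← integral_Ioi_pow_mul_exp_neg_mul_sq hb, intervalIntegral.integral_of_le pi_pos.le]
  refine MeasureTheory.setIntegral_mono_set (integrableOn_pow_mul_exp_neg_mul_sq hb _) ?_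
    (Set.Ioc_subset_Ioi_self.eventuallyLE)
  refine Filter.Eventually.of_forall fun θ ↦ ?_
  have := (even_two_mul k).pow_nonneg θ
  simp only [Pi.zero_apply]
  positivity

theorem integral_Ioi_zero_le {f : ℝ → ℝ} (hf : MeasureTheory.IntegrableOn f (Set.Ioi 0))
    (h : ∀ θ, π < θ → f θ ≤ 0) : ∫ θ in Set.Ioi (0 : ℝ), f θ ≤ ∫ θ in (0 : ℝ)..π, f θ := by
  have hf' := hf.mono_set (Set.Ioi_subset_Ioi pi_pos.le)
  rw [← intervalIntegral.integral_interval_add_Ioi hf hf']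
  have := MeasureTheory.setIntegral_nonpos (μ := MeasureTheory.volume) measurableSet_Ioi h
  linarith

theorem le_integral_exp_neg_mul_sq {b : ℝ} (hb : 0 < b) :
    √(π / b) * (1 / 2 - 1 / (36 * b)) ≤ ∫ θ in (0 : ℝ)..π, rexp (-b * θ ^ 2) := by
  have h0 := integral_Ioi_pow_mul_exp_neg_mul_sq hb 0
  have h1 := integral_Ioi_pow_mul_exp_neg_mul_sq hb 1
  have i0 := integrableOn_pow_mul_exp_neg_mul_sq hb (2 * 0)
  have i1 := integrableOn_pow_mul_exp_neg_mul_sq hb (2 * 1)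
  have h := MeasureTheory.integral_sub i0 (i1.const_mul (1 / 9))
  rw [MeasureTheory.integral_const_mul, h0, h1] at h
  calc √(π / b) * (1 / 2 - 1 / (36 * b)) = ∫ θ in Set.Ioi (0 : ℝ),
      (θ ^ (2 * 0) * rexp (-b * θ ^ 2) - 1 / 9 * (θ ^ (2 * 1) * rexp (-b * θ ^ 2))) := by
        rw [h]
        norm_num
        field_simp
        ring
    _ ≤ ∫ θ in (0 : ℝ)..π,
      (θ ^ (2 * 0) * rexp (-b * θ ^ 2) - 1 / 9 * (θ ^ (2 * 1) * rexp (-b * θ ^ 2))) := by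
        refine integral_Ioi_zero_le (i0.sub (i1.const_mul (1 / 9))) fun θ hθ ↦ ?_
        have := pi_gt_three
        have := exp_pos (-b * θ ^ 2)
        have : 9 ≤ θ ^ 2 := by nlinarith
        simp only [mul_zero, mul_one, pow_zero]
        nlinarith
    _ ≤ _ := by
        refine intervalIntegral.integral_mono_on pi_pos.le
          (Continuous.intervalIntegrable (by fun_prop) _ _)
          (Continuous.intervalIntegrable (by fun_prop) _ _) fun θ _ ↦ ?_
        have : 0 ≤ 1 / 9 * (θ ^ 2 * rexp (-b * θ ^ 2)) := by positivity
        simp only [mul_zero, pow_zero, one_mul, mul_one]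
        linarith

theorem le_integral_one_sub_cos_mul_exp_neg_mul_sq {b : ℝ} (hb : 0 < b) :
    √(π / b) * (1 / (8 * b) - 1 / (48 * b ^ 2)) ≤
      ∫ θ in (0 : ℝ)..π, (1 - cos θ) * rexp (-b * θ ^ 2) := by
  have h0 := integral_Ioi_pow_mul_exp_neg_mul_sq hb 1
  have h1 := integral_Ioi_pow_mul_exp_neg_mul_sq hb 2
  have i0 := integrableOn_pow_mul_exp_neg_mul_sq hb (2 * 1)
  have i1 := integrableOn_pow_mul_exp_neg_mul_sq hb (2 * 2)
  have h := MeasureTheory.integral_sub (i0.const_mul (1 / 2)) (i1.const_mul (1 / 18))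
  rw [MeasureTheory.integral_const_mul, MeasureTheory.integral_const_mul, h0, h1] at h
  calc √(π / b) * (1 / (8 * b) - 1 / (48 * b ^ 2)) = ∫ θ in Set.Ioi (0 : ℝ),
      (1 / 2 * (θ ^ (2 * 1) * rexp (-b * θ ^ 2)) -
        1 / 18 * (θ ^ (2 * 2) * rexp (-b * θ ^ 2))) := by
        rw [h]
        norm_num [Nat.doubleFactorial]
        field_simp
        ring
    _ ≤ ∫ θ in (0 : ℝ)..π, (1 / 2 * (θ ^ (2 * 1) * rexp (-b * θ ^ 2)) -
        1 / 18 * (θ ^ (2 * 2) * rexp (-b * θ ^ 2))) := by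
        refine integral_Ioi_zero_le ((i0.const_mul (1 / 2)).sub (i1.const_mul (1 / 18)))
          fun θ hθ ↦ ?_
        have := pi_gt_three
        have h1 := exp_pos (-b * θ ^ 2)
        have h2 : 9 ≤ θ ^ 2 := by nlinarith
        have h3 : 0 ≤ θ ^ 2 * (θ ^ 2 - 9) * rexp (-b * θ ^ 2) :=
          mul_nonneg (mul_nonneg (sq_nonneg θ) (sub_nonneg.2 h2)) h1.le
        linarith
    _ ≤ _ := by
        refine intervalIntegral.integral_mono_on pi_pos.le
          (Continuous.intervalIntegrable (by fun_prop) _ _)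
          (Continuous.intervalIntegrable (by fun_prop) _ _) fun θ _ ↦ ?_
        have h1 := cos_le_quartic θ
        have h2 : θ ^ 2 / 2 - θ ^ 4 / 18 ≤ 1 - cos θ := by nlinarith [sq_nonneg (θ ^ 2)]
        have := mul_le_mul_of_nonneg_right h2 (exp_pos (-b * θ ^ 2)).le
        linarith

theorem integral_le_of_forall_le {f f₁ f₂ f₃ : ℝ → ℝ} (hf : Continuous f) (hf₁ : Continuous f₁)
    (hf₂ : Continuous f₂) (hf₃ : Continuous f₃) (c₁ c₂ c₃ : ℝ)
    (h : ∀ θ, 0 ≤ θ → θ ≤ π → f θ ≤ c₁ * f₁ θ + c₂ * f₂ θ + c₃ * f₃ θ) :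
    ∫ θ in (0 : ℝ)..π, f θ ≤ c₁ * (∫ θ in (0 : ℝ)..π, f₁ θ) + c₂ * (∫ θ in (0 : ℝ)..π, f₂ θ) +
      c₃ * (∫ θ in (0 : ℝ)..π, f₃ θ) := by
  rw [← intervalIntegral.integral_const_mul, ← intervalIntegral.integral_const_mul,
    ← intervalIntegral.integral_const_mul, ← intervalIntegral.integral_add,
    ← intervalIntegral.integral_add]
  · exact intervalIntegral.integral_mono_on pi_pos.le (hf.intervalIntegrable _ _)
      (Continuous.intervalIntegrable (by fun_prop) _ _) fun θ hθ ↦ h θ hθ.1 hθ.2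
  all_goals exact Continuous.intervalIntegrable (by fun_prop) _ _

theorem exp_neg_div_le {ρ t : ℝ} {k : ℕ} (ht : 0 < t) (ht' : t ≤ 1 / 70) (hk : (k : ℝ) ≤ 70 * ρ) :
    rexp (-ρ / t) ≤ rexp (-(70 * ρ)) * (70 * t) ^ k := by
  have h1 : 1 / (70 * t) ≤ rexp (1 / (70 * t) - 1) := by
    linarith [add_one_le_exp (1 / (70 * t) - 1)]
  have h2 : 1 ≤ 1 / (70 * t) := by rw [le_div_iff₀ (by positivity)]; linarith
  have h3 : (1 / (70 * t)) ^ k ≤ rexp (ρ / t - 70 * ρ) := by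
    calc (1 / (70 * t)) ^ k ≤ rexp (1 / (70 * t) - 1) ^ k := by gcongr
      _ = rexp (k * (1 / (70 * t) - 1)) := by rw [exp_nat_mul]
      _ ≤ rexp (70 * ρ * (1 / (70 * t) - 1)) := by
        gcongr
      _ = _ := by
        congr 1
        field_simp
  have h4 : 1 = (1 / (70 * t)) ^ k * (70 * t) ^ k := by
    rw [← mul_pow]
    field_simp
    simp
  have h5 : rexp (-(70 * ρ)) = rexp (-ρ / t) * rexp (ρ / t - 70 * ρ) := by
    rw [← exp_add]
    ring_nf
  calc rexp (-ρ / t) = rexp (-ρ / t) * ((1 / (70 * t)) ^ k * (70 * t) ^ k) := by rw [← h4, mul_one]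
    _ ≤ rexp (-ρ / t) * (rexp (ρ / t - 70 * ρ) * (70 * t) ^ k) := by gcongr
    _ = _ := by rw [h5]; ring

theorem three_mul_exp_neg_le {t : ℝ} (ht : 0 < t) (ht' : t ≤ 1 / 70) :
    3 * rexp (-0.198 / t) ≤ 1.24 * t ^ 3 := by
  have h := exp_neg_div_le (ρ := 0.198) (k := 3) ht ht' (by norm_num)
  have h1 : rexp (-(70 * 0.198)) ≤ 0.0000012 := by
    have h2 : (1 / 0.0000012 : ℝ) ≤ rexp (70 * 0.198) := by
      have h3 : rexp (70 * 0.198) = rexp 1 ^ 13 * rexp 0.86 := by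
        rw [← exp_nat_mul, ← exp_add]
        norm_num
      have h4 := quadratic_le_exp_of_nonneg (x := 0.86) (by norm_num)
      have h5 : (2.718 : ℝ) ^ 13 ≤ rexp 1 ^ 13 := by
        gcongr
        linarith [exp_one_gt_d9]
      rw [h3]
      refine le_trans ?_ (mul_le_mul h5 h4 (by norm_num) (by positivity))
      norm_num
    rw [exp_neg, inv_le_comm₀ (exp_pos _) (by norm_num)]
    simpa using h2
  have h2 := mul_le_mul_of_nonneg_right h1 (by positivity : 0 ≤ (70 * t) ^ 3)
  rw [mul_pow] at h h2
  have := pow_pos ht 3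
  linarith

theorem exp_neg_far_le {t : ℝ} (ht : 0 < t) (ht' : t ≤ 1 / 70) :
    rexp (-0.38 / t) ≤ 0.354 * t ^ 6 := by
  have h := exp_neg_div_le (ρ := 0.38) (k := 6) ht ht' (by norm_num)
  have h1 : rexp (-(70 * 0.38)) ≤ 0.000000000003 := by
    have h2 : (1 / 0.000000000003 : ℝ) ≤ rexp (70 * 0.38) := by
      have h3 : rexp (70 * 0.38) = rexp 1 ^ 26 * rexp 0.6 := by
        rw [← exp_nat_mul, ← exp_add]
        norm_num
      have h4 := quadratic_le_exp_of_nonneg (x := 0.6) (by norm_num)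
      have h5 : (2.718 : ℝ) ^ 26 ≤ rexp 1 ^ 26 := by
        gcongr
        linarith [exp_one_gt_d9]
      rw [h3]
      refine le_trans ?_ (mul_le_mul h5 h4 (by norm_num) (by positivity))
      norm_num
    rw [exp_neg, inv_le_comm₀ (exp_pos _) (by norm_num)]
    simpa using h2
  have h2 := mul_le_mul_of_nonneg_right h1 (by positivity : 0 ≤ (70 * t) ^ 6)
  rw [mul_pow] at h h2
  have := pow_pos ht 6
  linarith

section
variable {t : ℝ}

theorem eulerKappa_one_pos (ht : 0 < t) (ht' : t ≤ 1 / 70) : 0 < eulerKappa 1 (rexp (-t)) :=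
  lt_of_lt_of_le (by positivity) (le_eulerKappa_one ht ht')

theorem pi_sq_div_six_le : π ^ 2 / 6 ≤ 1.64497 := by nlinarith [pi_lt_d4, pi_pos]

/-- The main term of the saddle point integral, doubled. -/
noncomputable def saddleWidth (t : ℝ) : ℝ := √(π / (eulerKappa 1 (rexp (-t)) / 2))

theorem saddleWidth_pos (ht : 0 < t) (ht' : t ≤ 1 / 70) : 0 < saddleWidth t := by
  have := eulerKappa_one_pos ht ht'
  unfold saddleWidth
  positivity

theorem sqrt_near_le (ht : 0 < t) (ht' : t ≤ 1 / 70) :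
    √(π / (0.4096 * eulerKappa 1 (rexp (-t)))) ≤ 1.105 * saddleWidth t := by
  have := eulerKappa_one_pos ht ht'
  have hw := saddleWidth_pos ht ht'
  rw [sqrt_le_left (by positivity), mul_pow, saddleWidth, sq_sqrt (by positivity)]
  rw [div_le_iff₀ (by positivity)]
  field_simp
  norm_num

theorem sqrt_mid_le (ht : 0 < t) (ht' : t ≤ 1 / 70) :
    √(π / (1 / (0.8 * t) ^ 2)) ≤ 0.124 * saddleWidth t / t := by
  have hk := eulerKappa_one_pos ht ht'
  have hw := saddleWidth_pos ht ht'
  have h1 : eulerKappa 1 (rexp (-t)) * t ^ 3 ≤ 3.29 := by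
    rw [← le_div_iff₀ (by positivity)]
    refine (eulerKappa_one_le ht).trans ?_
    gcongr
    linarith [pi_sq_div_six_le]
  have h2 : 0.32 * (eulerKappa 1 (rexp (-t)) * t ^ 3) * t ≤ 0.015376 := by nlinarith
  rw [sqrt_le_left (by positivity), div_pow, mul_pow (0.124 : ℝ), saddleWidth,
    sq_sqrt (by positivity),
    le_div_iff₀ (by positivity)]
  calc π / (1 / (0.8 * t) ^ 2) * t ^ 2 = (0.32 * (eulerKappa 1 (rexp (-t)) * t ^ 3) * t) *
        (π / (eulerKappa 1 (rexp (-t)) / 2)) := by field_simp; norm_num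
    _ ≤ 0.015376 * (π / (eulerKappa 1 (rexp (-t)) / 2)) := by gcongr
    _ = _ := by norm_num

theorem pi_le_saddleWidth (ht : 0 < t) (ht' : t ≤ 1 / 70) : π ≤ 0.273 * saddleWidth t / t ^ 2 := by
  have hk := eulerKappa_one_pos ht ht'
  have hw := saddleWidth_pos ht ht'
  have h1 : eulerKappa 1 (rexp (-t)) * t ^ 3 ≤ 3.29 := by
    rw [← le_div_iff₀ (by positivity)]
    refine (eulerKappa_one_le ht).trans ?_
    gcongr
    linarith [pi_sq_div_six_le]
  have h2 : eulerKappa 1 (rexp (-t)) * t ^ 3 * t / 2 ≤ 0.0235 := by nlinarith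
  refine le_of_sq_le_sq ?_ (by positivity)
  rw [div_pow, mul_pow, saddleWidth, sq_sqrt (by positivity), le_div_iff₀ (by positivity)]
  calc π ^ 2 * (t ^ 2) ^ 2 = π * (eulerKappa 1 (rexp (-t)) * t ^ 3 * t / 2) *
        (π / (eulerKappa 1 (rexp (-t)) / 2)) := by field_simp
    _ ≤ 3.1416 * 0.0235 * (π / (eulerKappa 1 (rexp (-t)) / 2)) := by
      gcongr
      exact pi_lt_d4.le
    _ ≤ _ := by
      gcongr
      norm_num

theorem continuous_midGaussian (t : ℝ) : Continuous (midGaussian t) := by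
  unfold midGaussian
  fun_prop

theorem integral_pow_mul_near_le (ht : 0 < t) (ht' : t ≤ 1 / 70) (k : ℕ) :
    ∫ θ in (0 : ℝ)..π, θ ^ (2 * k) * rexp (-(0.4096 * eulerKappa 1 (rexp (-t))) * θ ^ 2) ≤
      (2 * k - 1 : ℕ).doubleFactorial / 2 ^ (k + 1) * (1.105 * saddleWidth t) /
        (0.4096 * eulerKappa 1 (rexp (-t))) ^ k := by
  have hk := eulerKappa_one_pos ht ht'
  refine (integral_pow_mul_exp_neg_mul_sq_le (by positivity) k).trans ?_
  gcongr
  exact sqrt_near_le ht ht'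

theorem integral_midGaussian_le (ht : 0 < t) (ht' : t ≤ 1 / 70) :
    ∫ θ in (0 : ℝ)..π, midGaussian t θ ≤ 0.0769 * saddleWidth t * t ^ 2 := by
  have h := integral_pow_mul_exp_neg_mul_sq_le (b := 1 / (0.8 * t) ^ 2) (by positivity) 0
  have h2 := sqrt_mid_le ht ht'
  have h3 := three_mul_exp_neg_le ht ht'
  have hw := saddleWidth_pos ht ht'
  simp only [midGaussian, intervalIntegral.integral_const_mul]
  simp at h
  calc _ ≤ 1.24 * t ^ 3 * (1 / 2 * (0.124 * saddleWidth t / t)) := by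
        refine mul_le_mul h3 ?_ ?_ (by positivity)
        · refine le_trans ?_ (mul_le_mul_of_nonneg_left h2 (by norm_num))
          simpa using h
        · exact intervalIntegral.integral_nonneg pi_pos.le fun θ _ ↦ (exp_pos _).le
    _ ≤ _ := by
      rw [show 1.24 * t ^ 3 * (1 / 2 * (0.124 * saddleWidth t / t)) =
        0.07688 * (saddleWidth t * t ^ 2) by field_simp; norm_num]
      have : 0 < saddleWidth t * t ^ 2 := by positivity
      linarith

theorem integral_sq_mul_midGaussian_le (ht : 0 < t) (ht' : t ≤ 1 / 70) :
    ∫ θ in (0 : ℝ)..π, θ ^ 2 * midGaussian t θ ≤ 0.02461 * saddleWidth t * t ^ 4 := by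
  have h := integral_pow_mul_exp_neg_mul_sq_le (b := 1 / (0.8 * t) ^ 2) (by positivity) 1
  have h2 := sqrt_mid_le ht ht'
  have h3 := three_mul_exp_neg_le ht ht'
  have hw := saddleWidth_pos ht ht'
  have h4 : ∀ θ : ℝ, θ ^ 2 * midGaussian t θ =
    3 * rexp (-0.198 / t) * (θ ^ (2 * 1) * rexp (-(1 / (0.8 * t) ^ 2) * θ ^ 2)) := fun θ ↦ by
      rw [midGaussian]; ring
  simp only [h4, intervalIntegral.integral_const_mul]
  calc _ ≤ 1.24 * t ^ 3 * (1 / 4 * (0.124 * saddleWidth t / t) / (1 / (0.8 * t) ^ 2) ^ 1) := by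
        refine mul_le_mul h3 (h.trans ?_) ?_ (by positivity)
        · gcongr <;> norm_num
        · exact intervalIntegral.integral_nonneg pi_pos.le fun θ hθ ↦ by
            have := hθ.1
            positivity
    _ ≤ _ := by
      rw [show 1.24 * t ^ 3 * (1 / 4 * (0.124 * saddleWidth t / t) / (1 / (0.8 * t) ^ 2) ^ 1) =
        0.0246016 * (saddleWidth t * t ^ 4) by field_simp; norm_num]
      have : 0 < saddleWidth t * t ^ 4 := by positivity
      linarith

theorem exp_neg_far_mul_pi_le (ht : 0 < t) (ht' : t ≤ 1 / 70) :
    rexp (-0.38 / t) * π ≤ 0.09665 * saddleWidth t * t ^ 4 := by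
  have hw := saddleWidth_pos ht ht'
  calc rexp (-0.38 / t) * π ≤ 0.354 * t ^ 6 * (0.273 * saddleWidth t / t ^ 2) :=
        mul_le_mul (exp_neg_far_le ht ht') (pi_le_saddleWidth ht ht') pi_pos.le (by positivity)
    _ = 0.096642 * (saddleWidth t * t ^ 4) := by field_simp; norm_num
    _ ≤ _ := by
      have : 0 < saddleWidth t * t ^ 4 := by positivity
      linarith

end

section
variable {t : ℝ}

theorem inv_eulerKappa_one_le (ht : 0 < t) (ht' : t ≤ 1 / 70) :
    1 / eulerKappa 1 (rexp (-t)) ≤ 0.318 * t ^ 3 := by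
  have hk := eulerKappa_one_pos ht ht'
  have h := le_eulerKappa_one ht ht'
  rw [div_le_iff₀ (by positivity)] at h ⊢
  linarith

theorem eulerKappa_three_le_mul_sq (ht : 0 < t) (ht' : t ≤ 1 / 70) :
    eulerKappa 3 (rexp (-t)) ≤ 4.311 * t * eulerKappa 1 (rexp (-t)) ^ 2 := by
  have h := le_eulerKappa_one ht ht'
  calc _ ≤ 26 * (π ^ 2 / 6) / t ^ 5 := eulerKappa_three_le ht
    _ ≤ 26 * 1.64497 / t ^ 5 := by
      gcongr
      exact pi_sq_div_six_le
    _ ≤ 4.311 * 3.15 ^ 2 / t ^ 5 := by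
      refine div_le_div_of_nonneg_right ?_ (by positivity)
      norm_num
    _ = 4.311 * t * (3.15 / t ^ 3) ^ 2 := by field_simp
    _ ≤ _ := by gcongr

theorem eulerKappa_two_le_mul_sq (ht : 0 < t) (ht' : t ≤ 1 / 70) :
    eulerKappa 2 (rexp (-t)) ≤ 1.0282 * t ^ 2 * eulerKappa 1 (rexp (-t)) ^ 2 := by
  have h := le_eulerKappa_one ht ht'
  calc _ ≤ 6.2 * (π ^ 2 / 6) / t ^ 4 := eulerKappa_two_le ht
    _ ≤ 6.2 * 1.64497 / t ^ 4 := by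
      gcongr
      exact pi_sq_div_six_le
    _ ≤ 1.0282 * 3.15 ^ 2 / t ^ 4 := by
      refine div_le_div_of_nonneg_right ?_ (by positivity)
      norm_num
    _ = 1.0282 * t ^ 2 * (3.15 / t ^ 3) ^ 2 := by field_simp
    _ ≤ _ := by gcongr

theorem eulerKappa_nonneg (j : ℕ) {r : ℝ} (hr : 0 ≤ r) : 0 ≤ eulerKappa j r :=
  tsum_nonneg fun k ↦ by have := sigmaOne_nonneg k; positivity

theorem eulerKappa_two_sq_le_mul_cube (ht : 0 < t) (ht' : t ≤ 1 / 70) :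
    eulerKappa 2 (rexp (-t)) ^ 2 ≤ 3.329 * t * eulerKappa 1 (rexp (-t)) ^ 3 := by
  have h := le_eulerKappa_one ht ht'
  have h2 := eulerKappa_nonneg 2 (exp_pos (-t)).le
  calc _ ≤ (6.2 * (π ^ 2 / 6) / t ^ 4) ^ 2 := by
        gcongr
        exact eulerKappa_two_le ht
    _ ≤ (6.2 * 1.64497 / t ^ 4) ^ 2 := by
      gcongr
      exact pi_sq_div_six_le
    _ = (6.2 * 1.64497) ^ 2 / t ^ 8 := by rw [div_pow, ← pow_mul]
    _ ≤ 3.329 * 3.15 ^ 3 / t ^ 8 := by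
      refine div_le_div_of_nonneg_right ?_ (by positivity)
      norm_num
    _ = 3.329 * t * (3.15 / t ^ 3) ^ 3 := by field_simp
    _ ≤ _ := by gcongr

/-- The phase of the saddle point integrand. -/
noncomputable def saddlePhase (n : ℕ) (t θ : ℝ) : ℝ := eulerI (rexp (-t)) θ - n * θ

/-- The modulus of the saddle point integrand. -/
noncomputable def saddleModulus (t θ : ℝ) : ℝ := rexp (-eulerR (rexp (-t)) θ)

theorem continuous_saddlePhase (ht : 0 < t) (n : ℕ) : Continuous (saddlePhase n t) := by
  have := continuous_eulerI (exp_pos (-t)).le (by rw [exp_lt_one_iff]; linarith)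
  unfold saddlePhase
  fun_prop

theorem continuous_saddleModulus (ht : 0 < t) : Continuous (saddleModulus t) := by
  have := continuous_eulerR (exp_pos (-t)).le (by rw [exp_lt_one_iff]; linarith)
  unfold saddleModulus
  fun_prop

theorem saddleModulus_pos (t θ : ℝ) : 0 < saddleModulus t θ := exp_pos _

theorem abs_saddlePhase_le (ht : 0 < t) {n : ℕ} (hn : eulerKappa 0 (rexp (-t)) = n) {θ : ℝ}
    (hθ : 0 ≤ θ) : |saddlePhase n t θ| ≤ eulerKappa 2 (rexp (-t)) * (θ ^ 3 / 6) := by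
  rw [saddlePhase, ← hn]
  exact abs_eulerI_sub_le (exp_pos (-t)).le (by rw [exp_lt_one_iff]; linarith) hθ

theorem one_sub_cos_saddlePhase_le (ht : 0 < t) {n : ℕ} (hn : eulerKappa 0 (rexp (-t)) = n)
    {θ : ℝ} (hθ : 0 ≤ θ) :
    1 - cos (saddlePhase n t θ) ≤ eulerKappa 2 (rexp (-t)) ^ 2 / 72 * θ ^ 6 := by
  have h := abs_saddlePhase_le ht hn hθ
  have h1 := one_sub_sq_div_two_le_cos (x := saddlePhase n t θ)
  have h2 := pow_le_pow_left₀ (abs_nonneg _) h 2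
  rw [sq_abs] at h2
  nlinarith

/-- The saddle point integral. -/
noncomputable def saddleA (n : ℕ) (t : ℝ) : ℝ :=
  ∫ θ in (0 : ℝ)..π, saddleModulus t θ * cos (saddlePhase n t θ)

/-- The even part of the variation of the saddle point integral. -/
noncomputable def saddleC (n : ℕ) (t : ℝ) : ℝ :=
  ∫ θ in (0 : ℝ)..π, saddleModulus t θ * cos (saddlePhase n t θ) * (1 - cos θ)

/-- The odd part of the variation of the saddle point integral. -/
noncomputable def saddleB (n : ℕ) (t : ℝ) : ℝ :=
  ∫ θ in (0 : ℝ)..π, saddleModulus t θ * (sin (saddlePhase n t θ) * sin θ)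

theorem saddleA_le (ht : 0 < t) (ht' : t ≤ 1 / 70) (n : ℕ) :
    saddleA n t ≤ saddleWidth t * (1 / 2 + 0.45 * t) := by
  have hw := saddleWidth_pos ht ht'
  have hk := eulerKappa_one_pos ht ht'
  have c1 := continuous_saddlePhase ht n
  have c2 := continuous_saddleModulus ht
  have h := integral_le_of_forall_le
    (f := fun θ ↦ saddleModulus t θ * cos (saddlePhase n t θ) -
      rexp (-(eulerKappa 1 (rexp (-t)) / 2) * θ ^ 2))
    (f₁ := fun θ ↦ θ ^ (2 * 2) * rexp (-(0.4096 * eulerKappa 1 (rexp (-t))) * θ ^ 2))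
    (f₂ := midGaussian t) (f₃ := fun _ ↦ 1) (by fun_prop) (by fun_prop)
    (continuous_midGaussian t) (by fun_prop) (eulerKappa 3 (rexp (-t)) / 24) 1
    (rexp (-0.38 / t)) fun θ h0 hθ ↦ by
      have h1 := exp_neg_eulerR_le ht ht' h0 hθ
      have h2 := mul_le_of_le_one_right (saddleModulus_pos t θ).le
        (cos_le_one (saddlePhase n t θ))
      rw [saddleModulus] at h2
      simp only [saddleModulus]
      norm_num at h1 h2 ⊢
      linarith
  rw [intervalIntegral.integral_sub (Continuous.intervalIntegrable (by fun_prop) _ _)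
    (Continuous.intervalIntegrable (by fun_prop) _ _), ← saddleA] at h
  have hG := (integral_pow_mul_exp_neg_mul_sq_le (b := eulerKappa 1 (rexp (-t)) / 2)
    (by positivity) 0).trans_eq (b := _) (c := saddleWidth t / 2)
      (by rw [← saddleWidth]; simp; ring)
  simp only [mul_zero, pow_zero, one_mul] at hG
  have hJ := integral_pow_mul_near_le ht ht' 2
  have hM := integral_midGaussian_le ht ht'
  have hF := exp_neg_far_mul_pi_le ht ht'
  have h1 : eulerKappa 3 (rexp (-t)) / 24 * ∫ θ in (0 : ℝ)..π,
      θ ^ (2 * 2) * rexp (-(0.4096 * eulerKappa 1 (rexp (-t))) * θ ^ 2) ≤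
      0.4439 * saddleWidth t * t := by
    calc _ ≤ (4.311 * t * eulerKappa 1 (rexp (-t)) ^ 2) / 24 *
          ((2 * 2 - 1 : ℕ).doubleFactorial / 2 ^ (2 + 1) * (1.105 * saddleWidth t) /
            (0.4096 * eulerKappa 1 (rexp (-t))) ^ 2) := by
          refine mul_le_mul ?_ hJ ?_ (by positivity)
          · gcongr
            exact eulerKappa_three_le_mul_sq ht ht'
          · exact intervalIntegral.integral_nonneg pi_pos.le fun θ hθ ↦ by
              have := hθ.1
              positivity
      _ ≤ _ := by
          norm_num [Nat.doubleFactorial]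
          field_simp
          norm_num
  simp only [intervalIntegral.integral_const, sub_zero, smul_eq_mul, mul_one, one_mul] at h
  have e1 : 0 < saddleWidth t * t := by positivity
  have e2 : saddleWidth t * t ^ 2 ≤ saddleWidth t * t / 70 := by nlinarith
  have e3 : saddleWidth t * t ^ 4 ≤ saddleWidth t * t / 70 ^ 3 := by
    have : t ^ 3 ≤ (1 / 70) ^ 3 := by gcongr
    nlinarith
  nlinarith only [h, hG, hM, hF, h1, e1, e2, e3]

theorem le_saddleA (ht : 0 < t) (ht' : t ≤ 1 / 70) {n : ℕ} (hn : eulerKappa 0 (rexp (-t)) = n) :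
    saddleWidth t * (1 / 2 - 0.71 * t) ≤ saddleA n t := by
  have hw := saddleWidth_pos ht ht'
  have hk := eulerKappa_one_pos ht ht'
  have c1 := continuous_saddlePhase ht n
  have c2 := continuous_saddleModulus ht
  have h := integral_le_of_forall_le
    (f := fun θ ↦ rexp (-(eulerKappa 1 (rexp (-t)) / 2) * θ ^ 2) -
      saddleModulus t θ * cos (saddlePhase n t θ))
    (f₁ := fun θ ↦ θ ^ (2 * 3) * rexp (-(0.4096 * eulerKappa 1 (rexp (-t))) * θ ^ 2))
    (f₂ := midGaussian t) (f₃ := fun _ ↦ 1) (by fun_prop) (by fun_prop)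
    (continuous_midGaussian t) (by fun_prop) (eulerKappa 2 (rexp (-t)) ^ 2 / 72) 2
    (2 * rexp (-0.38 / t)) fun θ h0 hθ ↦ by
      have h1 := exp_neg_le_exp_neg_eulerR ht θ
      have h3 := cos_le_one (saddlePhase n t θ)
      have h4 := neg_one_le_cos (saddlePhase n t θ)
      have h2 := exp_neg_eulerR_mul_le ht ht' h0 hθ (sub_nonneg.2 h3)
        (one_sub_cos_saddlePhase_le ht hn h0) (b := 2) (c := 2) (fun _ ↦ by linarith)
        zero_le_two (by linarith)
      simp only [saddleModulus]
      nlinarith only [h1, h2]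
  rw [intervalIntegral.integral_sub (Continuous.intervalIntegrable (by fun_prop) _ _)
    (Continuous.intervalIntegrable (by fun_prop) _ _), ← saddleA] at h
  have hG := le_integral_exp_neg_mul_sq (b := eulerKappa 1 (rexp (-t)) / 2) (by positivity)
  rw [← saddleWidth, show 1 / (36 * (eulerKappa 1 (rexp (-t)) / 2)) =
    1 / eulerKappa 1 (rexp (-t)) / 18 by field_simp; norm_num] at hG
  have hI := inv_eulerKappa_one_le ht ht'
  have hJ := integral_pow_mul_near_le ht ht' 3
  have hM := integral_midGaussian_le ht ht'
  have hF := exp_neg_far_mul_pi_le ht ht'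
  have h1 : eulerKappa 2 (rexp (-t)) ^ 2 / 72 * ∫ θ in (0 : ℝ)..π,
      θ ^ (2 * 3) * rexp (-(0.4096 * eulerKappa 1 (rexp (-t))) * θ ^ 2) ≤
      0.6972 * saddleWidth t * t := by
    calc _ ≤ (3.329 * t * eulerKappa 1 (rexp (-t)) ^ 3) / 72 *
          ((2 * 3 - 1 : ℕ).doubleFactorial / 2 ^ (3 + 1) * (1.105 * saddleWidth t) /
            (0.4096 * eulerKappa 1 (rexp (-t))) ^ 3) := by
          refine mul_le_mul ?_ hJ ?_ (by positivity)
          · gcongr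
            exact eulerKappa_two_sq_le_mul_cube ht ht'
          · exact intervalIntegral.integral_nonneg pi_pos.le fun θ hθ ↦ by
              have := hθ.1
              positivity
      _ ≤ _ := by
          norm_num [Nat.doubleFactorial]
          field_simp
          norm_num
  simp only [intervalIntegral.integral_const, sub_zero, smul_eq_mul, mul_one] at h
  have e1 : 0 < saddleWidth t * t := by positivity
  have e2 : saddleWidth t * t ^ 2 ≤ saddleWidth t * t / 70 := by nlinarith
  have e3 : saddleWidth t * t ^ 3 ≤ saddleWidth t * t / 70 ^ 2 := by
    have : t ^ 2 ≤ (1 / 70) ^ 2 := by gcongr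
    nlinarith
  have e4 : saddleWidth t * t ^ 4 ≤ saddleWidth t * t / 70 ^ 3 := by
    have : t ^ 3 ≤ (1 / 70) ^ 3 := by gcongr
    nlinarith
  have e5 := mul_le_mul_of_nonneg_left hI hw.le
  nlinarith only [h, hG, hM, hF, h1, e1, e2, e3, e4, e5]

theorem le_saddleC (ht : 0 < t) (ht' : t ≤ 1 / 70) {n : ℕ} (hn : eulerKappa 0 (rexp (-t)) = n) :
    saddleWidth t / eulerKappa 1 (rexp (-t)) * (1 / 4 - 3.7 * t) ≤ saddleC n t := by
  have hw := saddleWidth_pos ht ht'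
  have hk := eulerKappa_one_pos ht ht'
  have c1 := continuous_saddlePhase ht n
  have c2 := continuous_saddleModulus ht
  have c3 := continuous_midGaussian t
  have h := integral_le_of_forall_le
    (f := fun θ ↦ (1 - cos θ) * rexp (-(eulerKappa 1 (rexp (-t)) / 2) * θ ^ 2) -
      saddleModulus t θ * cos (saddlePhase n t θ) * (1 - cos θ))
    (f₁ := fun θ ↦ θ ^ (2 * 4) * rexp (-(0.4096 * eulerKappa 1 (rexp (-t))) * θ ^ 2))
    (f₂ := fun θ ↦ θ ^ 2 * midGaussian t θ) (f₃ := fun θ ↦ 1 - cos θ) (by fun_prop) (by fun_prop)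
    (by fun_prop) (by fun_prop) (eulerKappa 2 (rexp (-t)) ^ 2 / 144) 1
    (2 * rexp (-0.38 / t)) fun θ h0 hθ ↦ by
      have h1 := mul_le_mul_of_nonneg_left (exp_neg_le_exp_neg_eulerR ht θ)
        (sub_nonneg.2 (cos_le_one θ))
      have h3 := cos_le_one (saddlePhase n t θ)
      have h4 := neg_one_le_cos (saddlePhase n t θ)
      have h5 : 1 - cos θ ≤ θ ^ 2 / 2 := by linarith [one_sub_sq_div_two_le_cos (x := θ)]
      have h6 := sub_nonneg.2 (cos_le_one θ)
      have h2 := exp_neg_eulerR_mul_le ht ht' h0 hθ (mul_nonneg h6 (sub_nonneg.2 h3))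
        (mul_le_mul h5 (one_sub_cos_saddlePhase_le ht hn h0) (sub_nonneg.2 h3) (by positivity))
        (b := θ ^ 2) (c := 2 * (1 - cos θ)) (fun _ ↦ by nlinarith) (by positivity) (by nlinarith)
      simp only [saddleModulus]
      nlinarith only [h1, h2]
  rw [intervalIntegral.integral_sub (Continuous.intervalIntegrable (by fun_prop) _ _)
    (Continuous.intervalIntegrable (by fun_prop) _ _), ← saddleC] at h
  have hG := le_integral_one_sub_cos_mul_exp_neg_mul_sq (b := eulerKappa 1 (rexp (-t)) / 2)
    (by positivity)
  rw [← saddleWidth, show saddleWidth t * (1 / (8 * (eulerKappa 1 (rexp (-t)) / 2)) -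
    1 / (48 * (eulerKappa 1 (rexp (-t)) / 2) ^ 2)) = saddleWidth t / eulerKappa 1 (rexp (-t)) *
      (1 / 4 - 1 / eulerKappa 1 (rexp (-t)) / 12) by field_simp; ring] at hG
  have hI := inv_eulerKappa_one_le ht ht'
  have hJ := integral_pow_mul_near_le ht ht' 4
  have hM := integral_sq_mul_midGaussian_le ht ht'
  have hF := exp_neg_far_mul_pi_le ht ht'
  obtain ⟨v, hv⟩ : ∃ v, v = saddleWidth t / eulerKappa 1 (rexp (-t)) := ⟨_, rfl⟩
  have hv0 : 0 < v := by rw [hv]; positivity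
  have hwv : saddleWidth t * t ^ 3 ≤ 3.29 * v := by
    rw [hv, mul_div_assoc', le_div_iff₀ hk]
    have h1 : eulerKappa 1 (rexp (-t)) * t ^ 3 ≤ 3.29 := by
      rw [← le_div_iff₀ (by positivity)]
      refine (eulerKappa_one_le ht).trans ?_
      gcongr
      linarith [pi_sq_div_six_le]
    nlinarith
  have h1 : eulerKappa 2 (rexp (-t)) ^ 2 / 144 * ∫ θ in (0 : ℝ)..π,
      θ ^ (2 * 4) * rexp (-(0.4096 * eulerKappa 1 (rexp (-t))) * θ ^ 2) ≤ 2.979 * v * t := by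
    calc _ ≤ (3.329 * t * eulerKappa 1 (rexp (-t)) ^ 3) / 144 *
          ((2 * 4 - 1 : ℕ).doubleFactorial / 2 ^ (4 + 1) * (1.105 * saddleWidth t) /
            (0.4096 * eulerKappa 1 (rexp (-t))) ^ 4) := by
          refine mul_le_mul ?_ hJ ?_ (by positivity)
          · gcongr
            exact eulerKappa_two_sq_le_mul_cube ht ht'
          · exact intervalIntegral.integral_nonneg pi_pos.le fun θ hθ ↦ by
              have := hθ.1
              positivity
      _ ≤ _ := by
          rw [hv]
          norm_num [Nat.doubleFactorial]
          field_simp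
          norm_num
  have hcos : ∫ θ in (0 : ℝ)..π, (1 - cos θ) = π := by
    rw [intervalIntegral.integral_sub (by simp) (by simp)]
    simp
  rw [hcos] at h
  rw [← hv] at hG ⊢
  have e1 : 0 < v * t := by positivity
  have e3 : v * t ^ 3 ≤ v * t / 70 ^ 2 := by
    have : t ^ 2 ≤ (1 / 70) ^ 2 := by gcongr
    nlinarith
  have e4 : saddleWidth t * t ^ 4 ≤ 3.29 * (v * t) := by nlinarith
  have e5 := mul_le_mul_of_nonneg_left hI hv0.le
  nlinarith only [h, hG, hM, hF, h1, e1, e3, e4, e5]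

theorem abs_saddleB_le (ht : 0 < t) (ht' : t ≤ 1 / 70) {n : ℕ}
    (hn : eulerKappa 0 (rexp (-t)) = n) : |saddleB n t| ≤ saddleWidth t * (0.425 * t ^ 2) := by
  have hw := saddleWidth_pos ht ht'
  have hk := eulerKappa_one_pos ht ht'
  have hk2 := eulerKappa_nonneg 2 (exp_pos (-t)).le
  have c1 := continuous_saddlePhase ht n
  have c2 := continuous_saddleModulus ht
  have h := integral_le_of_forall_le
    (f := fun θ ↦ |saddleModulus t θ * (sin (saddlePhase n t θ) * sin θ)|)
    (f₁ := fun θ ↦ θ ^ (2 * 2) * rexp (-(0.4096 * eulerKappa 1 (rexp (-t))) * θ ^ 2))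
    (f₂ := midGaussian t) (f₃ := fun _ ↦ 1) (by fun_prop) (by fun_prop)
    (continuous_midGaussian t) (by fun_prop) (eulerKappa 2 (rexp (-t)) / 6) (0.8 * t)
    (rexp (-0.38 / t)) fun θ h0 hθ ↦ by
      have h1 : |sin θ| ≤ θ := by simpa [abs_of_nonneg h0] using abs_sin_le_abs (x := θ)
      have h3 : |sin (saddlePhase n t θ)| ≤ eulerKappa 2 (rexp (-t)) * (θ ^ 3 / 6) :=
        abs_sin_le_abs.trans (abs_saddlePhase_le ht hn h0)
      have h4 := abs_sin_le_one θ
      have h5 := abs_sin_le_one (saddlePhase n t θ)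
      have h2 := exp_neg_eulerR_mul_le ht ht' h0 hθ
        (mul_nonneg (abs_nonneg (sin (saddlePhase n t θ))) (abs_nonneg (sin θ)))
        (mul_le_mul h3 h1 (abs_nonneg _) (by positivity)) (b := 0.8 * t) (c := 1)
        (fun h ↦ (mul_le_of_le_one_left (abs_nonneg _) h5).trans (h1.trans h)) (by positivity)
        (mul_le_one₀ h5 (abs_nonneg _) h4)
      simp only [abs_mul, saddleModulus, abs_exp]
      nlinarith only [h2]
  have h0 := (intervalIntegral.abs_integral_le_integral_abs pi_pos.le).trans h
  rw [← saddleB] at h0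
  have hJ := integral_pow_mul_near_le ht ht' 2
  have hM := integral_midGaussian_le ht ht'
  have hF := exp_neg_far_mul_pi_le ht ht'
  have h1 : eulerKappa 2 (rexp (-t)) / 6 * ∫ θ in (0 : ℝ)..π,
      θ ^ (2 * 2) * rexp (-(0.4096 * eulerKappa 1 (rexp (-t))) * θ ^ 2) ≤
      0.4234 * saddleWidth t * t ^ 2 := by
    calc _ ≤ (1.0282 * t ^ 2 * eulerKappa 1 (rexp (-t)) ^ 2) / 6 *
          ((2 * 2 - 1 : ℕ).doubleFactorial / 2 ^ (2 + 1) * (1.105 * saddleWidth t) /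
            (0.4096 * eulerKappa 1 (rexp (-t))) ^ 2) := by
          refine mul_le_mul ?_ hJ ?_ (by positivity)
          · gcongr
            exact eulerKappa_two_le_mul_sq ht ht'
          · exact intervalIntegral.integral_nonneg pi_pos.le fun θ hθ ↦ by
              have := hθ.1
              positivity
      _ ≤ _ := by
          norm_num [Nat.doubleFactorial]
          field_simp
          norm_num
  simp only [intervalIntegral.integral_const, sub_zero, smul_eq_mul, mul_one] at h0
  have e1 : 0 < saddleWidth t * t ^ 2 := by positivity
  have e2 : t * (saddleWidth t * t ^ 2) ≤ saddleWidth t * t ^ 2 / 70 := by nlinarith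
  have e3 : saddleWidth t * t ^ 4 ≤ saddleWidth t * t ^ 2 / 70 ^ 2 := by
    have : t ^ 2 ≤ (1 / 70) ^ 2 := by gcongr
    nlinarith
  have e4 := mul_le_mul_of_nonneg_left hM ht.le
  linarith only [h0, hM, hF, h1, e1, e2, e3, e4]

end

section
variable {t : ℝ} {n : ℕ}

theorem saddleA_eq (ht : 0 < t) (n : ℕ) :
    saddleA n t = π * p n * rexp (-t) ^ n * rexp (-eulerG (rexp (-t))) :=
  integral_exp_neg_eulerR_mul_cos (exp_pos _) (by rw [exp_lt_one_iff]; linarith) n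

theorem saddleA_sub_add_eq (ht : 0 < t) (n : ℕ) :
    saddleA n t - saddleC n t + saddleB n t = saddleA (n + 1) t := by
  have c1 := continuous_saddlePhase ht n
  have c2 := continuous_saddleModulus ht
  rw [saddleA, saddleB, saddleC, saddleA, ← intervalIntegral.integral_sub,
    ← intervalIntegral.integral_add]
  · congr 1
    funext θ
    rw [show saddlePhase (n + 1) t θ = saddlePhase n t θ - θ by
      simp only [saddlePhase]; push_cast; ring, cos_sub]
    ring
  all_goals exact Continuous.intervalIntegrable (by fun_prop) _ _

theorem saddleA_sub_sub_eq (ht : 0 < t) (hn : n ≠ 0) :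
    saddleA n t - saddleC n t - saddleB n t = saddleA (n - 1) t := by
  have c1 := continuous_saddlePhase ht n
  have c2 := continuous_saddleModulus ht
  rw [saddleA, saddleB, saddleC, saddleA, ← intervalIntegral.integral_sub,
    ← intervalIntegral.integral_sub]
  · congr 1
    funext θ
    rw [show saddlePhase (n - 1) t θ = saddlePhase n t θ + θ by
      simp only [saddlePhase]; rw [Nat.cast_pred (Nat.pos_of_ne_zero hn)]; ring, cos_add]
    ring
  all_goals exact Continuous.intervalIntegrable (by fun_prop) _ _

theorem saddleA_pos (ht : 0 < t) (n : ℕ) : 0 < saddleA n t := by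
  have := p_pos n
  rw [saddleA_eq ht]
  positivity

theorem log_p_eq (ht : 0 < t) (n : ℕ) :
    log (p n) = log (saddleA n t / π) + n * t + eulerG (rexp (-t)) := by
  have := p_pos n
  have h : saddleA n t / π = p n * rexp (-(n * t) - eulerG (rexp (-t))) := by
    rw [saddleA_eq ht, sub_eq_add_neg, exp_add, ← exp_nat_mul]
    field_simp
  rw [h, log_mul this.ne' (exp_pos _).ne', log_exp]
  ring

theorem exp_neg_mul_saddleA_le (ht : 0 < t) (n : ℕ) :
    rexp (-t) * saddleA n t ≤ saddleA (n + 1) t := by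
  have h : (p n : ℝ) ≤ p (n + 1) := by
    have := card_partition_mono n.le_succ
    simp only [p]
    exact_mod_cast this
  rw [saddleA_eq ht, saddleA_eq ht, pow_succ]
  calc _ = π * p n * (rexp (-t) ^ n * rexp (-t)) * rexp (-eulerG (rexp (-t))) := by ring
    _ ≤ _ := by gcongr

theorem logDefect_le_saddle (ht : 0 < t) (hn : n ≠ 0) :
    logDefect n ≤ 2 * eulerG (rexp (-t)) + 2 * log (saddleA n t / π) -
      2 * n ^ 2 * (saddleC n t / saddleA n t) +
      2 * n * (rexp t * |saddleB n t| / saddleA n t) := by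
  have hA := saddleA_pos ht n
  have hP := saddleA_pos ht (n + 1)
  have hM := saddleA_pos ht (n - 1)
  have hP1 := exp_neg_mul_saddleA_le ht n
  have h0 := log_p_eq ht n
  have h1 := log_p_eq ht (n + 1)
  have h2 := log_p_eq ht (n - 1)
  rw [Nat.cast_pred (Nat.pos_of_ne_zero hn)] at h2
  push_cast at h1
  have eP := saddleA_sub_add_eq ht n
  have eM := saddleA_sub_sub_eq ht hn
  rw [log_div (by positivity) (by positivity)] at h0 h1 h2
  have hsum : log (saddleA (n + 1) t) + log (saddleA (n - 1) t) - 2 * log (saddleA n t) ≤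
      -2 * (saddleC n t / saddleA n t) := by
    have hAC : 0 < saddleA n t - saddleC n t := by linarith
    have h3 : log (saddleA (n + 1) t) + log (saddleA (n - 1) t) ≤
        2 * log (saddleA n t - saddleC n t) := by
      rw [← log_mul hP.ne' hM.ne', ← Nat.cast_two, ← log_pow]
      refine log_le_log (by positivity) ?_
      rw [← eP, ← eM]
      nlinarith [sq_nonneg (saddleB n t)]
    have h4 := log_le_sub_one_of_pos (div_pos hAC hA)
    rw [log_div hAC.ne' hA.ne', sub_div, div_self hA.ne'] at h4
    linarith
  have hdiff : log (saddleA (n - 1) t) - log (saddleA (n + 1) t) ≤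
      2 * (rexp t * |saddleB n t| / saddleA n t) := by
    have h4 := log_le_sub_one_of_pos (div_pos hM hP)
    rw [log_div hM.ne' hP.ne'] at h4
    refine h4.trans ?_
    rw [div_sub_one hP.ne', mul_div_assoc', div_le_div_iff₀ hP hA]
    have h5 : saddleA (n - 1) t - saddleA (n + 1) t ≤ 2 * |saddleB n t| := by
      rw [← eP, ← eM]
      linarith [neg_abs_le (saddleB n t)]
    have h6 : rexp t * rexp (-t) = 1 := by rw [← exp_add]; simp
    calc _ ≤ 2 * |saddleB n t| * saddleA n t := by gcongr
      _ = 2 * (rexp t * |saddleB n t|) * (rexp (-t) * saddleA n t) := by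
        linear_combination -2 * |saddleB n t| * saddleA n t * h6
      _ ≤ _ := by gcongr
  rw [log_div (by positivity) (by positivity), logDefect, h0, h1, h2]
  have e1 := mul_le_mul_of_nonneg_left hsum (sq_nonneg (n : ℝ))
  have e2 := mul_le_mul_of_nonneg_left hdiff (Nat.cast_nonneg (α := ℝ) n)
  linarith

theorem seventy_log_bound : 4.244 ≤ log 70 := by
  have h : log 70 = 6 * log 2 - log (64 / 70) := by
    rw [log_div (by norm_num) (by norm_num), show (64 : ℝ) = 2 ^ 6 by norm_num, log_pow]
    push_cast
    ring
  have := log_two_gt_d9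
  have := log_le_sub_one_of_pos (x := 64 / 70) (by norm_num)
  rw [h]
  linarith

theorem two_mul_log_saddleA_le (ht : 0 < t) (ht' : t ≤ 1 / 70) (n : ℕ) :
    2 * log (saddleA n t / π) - log (4 / t) ≤ -21.22 := by
  have hA := saddleA_pos ht n
  have hA' := saddleA_le ht ht' n
  have hk := eulerKappa_one_pos ht ht'
  have hI := inv_eulerKappa_one_le ht ht'
  have hw := saddleWidth_pos ht ht'
  have hw2 : saddleWidth t ^ 2 = 2 * π * (1 / eulerKappa 1 (rexp (-t))) := by
    rw [saddleWidth, sq_sqrt (by positivity)]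
    field_simp
  have h1 : saddleA n t ≤ saddleWidth t * 0.507 := hA'.trans (by gcongr; linarith)
  have h2 : (saddleA n t / π) ^ 2 * (t / 4) ≤ (1 / 70) ^ 5 := by
    have hpi := pi_gt_three
    calc (saddleA n t / π) ^ 2 * (t / 4) ≤ (saddleWidth t * 0.507 / π) ^ 2 * (t / 4) := by gcongr
      _ = 0.507 ^ 2 / 2 / π * (1 / eulerKappa 1 (rexp (-t))) * t := by
        rw [div_pow, mul_pow, hw2]
        field_simp
        ring
      _ ≤ 0.507 ^ 2 / 2 / 3.1415 * (0.318 * t ^ 3) * t := by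
        gcongr
        exact pi_gt_d4.le
      _ = 0.507 ^ 2 / 2 / 3.1415 * 0.318 * t ^ 4 := by ring
      _ ≤ 1 / 70 * (1 / 70) ^ 4 := by
        gcongr
        norm_num
      _ = _ := by norm_num
  have h3 := log_le_log (by positivity) h2
  rw [log_mul (by positivity) (by positivity), log_pow, log_pow, one_div, log_inv] at h3
  have h4 : log (t / 4) = -log (4 / t) := by rw [← log_inv, inv_div]
  have := seventy_log_bound
  rw [h4] at h3
  push_cast at h3
  linarith

theorem logDefect_le (ht : 0 < t) (ht' : t ≤ 1 / 70) (hn0 : n ≠ 0)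
    (hn : eulerKappa 0 (rexp (-t)) = n) : logDefect n ≤ 3 / 2 * (π ^ 2 / 6 / t) - 2.9 := by
  have h := logDefect_le_saddle ht hn0
  have hG := eulerG_le_sub_log ht
  have hl := two_mul_log_saddleA_le ht ht' n
  have hA := saddleA_pos ht n
  have hA1 := saddleA_le ht ht' n
  have hA2 := le_saddleA ht ht' hn
  have hC := le_saddleC ht ht' hn
  have hB := abs_saddleB_le ht ht' hn
  have hw := saddleWidth_pos ht ht'
  have hk := eulerKappa_one_pos ht ht'
  have hk1 := eulerKappa_one_le ht
  have hn1 := le_eulerKappa_zero ht ht'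
  have hn2 := eulerKappa_zero_le ht
  rw [hn] at hn1 hn2
  have hpi := pi_sq_div_six_le
  obtain ⟨c, hc⟩ : ∃ c, c = π ^ 2 / 6 := ⟨_, rfl⟩
  have hc1 : 1.5 ≤ c := by rw [hc]; nlinarith [pi_gt_three]
  rw [show π ^ 2 / 3 = 2 * c by rw [hc]; ring] at hk1
  rw [← hc] at hG hn1 hn2 hpi ⊢
  have hCA : 1 / eulerKappa 1 (rexp (-t)) * (1 / 2 * (1 - 15.7 * t)) ≤
      saddleC n t / saddleA n t := by
    rw [le_div_iff₀ hA]
    refine le_trans ?_ hC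
    calc _ ≤ 1 / eulerKappa 1 (rexp (-t)) * (1 / 2 * (1 - 15.7 * t)) *
          (saddleWidth t * (1 / 2 + 0.45 * t)) := by
          gcongr
          have : 0 ≤ 1 - 15.7 * t := by linarith
          positivity
      _ = saddleWidth t / eulerKappa 1 (rexp (-t)) *
          (1 / 2 * (1 - 15.7 * t) * (1 / 2 + 0.45 * t)) := by ring
      _ ≤ _ := by
          gcongr
          nlinarith
  have hkey : c / (2 * t) - 14.27 ≤ 2 * n ^ 2 * (saddleC n t / saddleA n t) := by
    have ht15 : 0 ≤ 1 - 15.7 * t := by linarith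
    have h70 : 70 ≤ 1 / t := by rw [le_div_iff₀ ht]; linarith
    have hlow : 0 ≤ c / t ^ 2 - 1.35 / t := by
      have : c / t ^ 2 - 1.35 / t = (c * (1 / t) - 1.35) * (1 / t) := by field_simp
      rw [this]
      have : 0 ≤ c * (1 / t) - 1.35 := by nlinarith
      positivity
    have hinv : t ^ 3 / (2 * c) ≤ 1 / eulerKappa 1 (rexp (-t)) := by
      rw [le_div_iff₀ hk]
      calc t ^ 3 / (2 * c) * eulerKappa 1 (rexp (-t)) ≤
          t ^ 3 / (2 * c) * (2 * c / t ^ 3) := by gcongr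
        _ = 1 := by field_simp
    calc c / (2 * t) - 14.27 ≤ (c / (2 * t) - 1.35) * (1 - 15.7 * t) := by
          have : (c / (2 * t) - 1.35) * (1 - 15.7 * t) =
            c / (2 * t) - 1.35 - 7.85 * c + 1.35 * 15.7 * t := by field_simp; ring
          rw [this]
          linarith
      _ ≤ (c / t ^ 2 - 1.35 / t) ^ 2 * (t ^ 3 / (2 * c)) * (1 - 15.7 * t) := by
          gcongr
          have : (c / t ^ 2 - 1.35 / t) ^ 2 * (t ^ 3 / (2 * c)) =
            c / (2 * t) - 1.35 + 1.35 ^ 2 * t / (2 * c) := by field_simp; ring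
          rw [this]
          have : 0 ≤ 1.35 ^ 2 * t / (2 * c) := by positivity
          linarith
      _ ≤ (n : ℝ) ^ 2 * (1 / eulerKappa 1 (rexp (-t))) * (1 - 15.7 * t) := by
          refine mul_le_mul_of_nonneg_right (mul_le_mul (pow_le_pow_left₀ hlow hn1 2) hinv
            (by positivity) (by positivity)) ht15
      _ = 2 * n ^ 2 * (1 / eulerKappa 1 (rexp (-t)) * (1 / 2 * (1 - 15.7 * t))) := by ring
      _ ≤ _ := by gcongr
  have hBA : 2 * n * (rexp t * |saddleB n t| / saddleA n t) ≤ 3 := by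
    have hexp : rexp t ≤ 70 / 69 := by
      have h1 := add_one_le_exp (-t)
      have h2 : rexp t * rexp (-t) = 1 := by rw [← exp_add]; simp
      have := exp_pos t
      nlinarith
    have h1 : rexp t * |saddleB n t| / saddleA n t ≤ 0.8809 * t ^ 2 := by
      rw [div_le_iff₀ hA]
      have h2 : saddleWidth t * 0.4898 ≤ saddleA n t := le_trans (by gcongr; linarith) hA2
      calc rexp t * |saddleB n t| ≤ 70 / 69 * (saddleWidth t * (0.425 * t ^ 2)) := by gcongr
        _ ≤ 0.8809 * t ^ 2 * (saddleWidth t * 0.4898) := by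
          have : 0 < saddleWidth t * t ^ 2 := by positivity
          linarith
        _ ≤ _ := by gcongr
    calc _ ≤ 2 * (c / t ^ 2) * (0.8809 * t ^ 2) := by gcongr
      _ = 2 * 0.8809 * c := by field_simp
      _ ≤ 3 := by linarith
  have e : 3 / 2 * (c / t) = 2 * (c / t) - c / (2 * t) := by field_simp; ring
  rw [e]
  linarith

end

theorem logDefect_lt_of_large {n : ℕ} (hn : 8194 ≤ n) : logDefect n <
    ((n : ℝ) ^ 3 - n) * log (1 + 3 * π / (Real.sqrt 24 * (n : ℝ) ^ ((5 : ℝ) / 2))) := by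
  obtain ⟨t, ht, ht', htn⟩ := exists_eulerKappa_zero_eq hn
  refine lt_of_lt_of_le ?_ (mul_sqrt_le_mul_log (by omega))
  refine (logDefect_le ht ht' (by omega) htn).trans_lt ?_
  have hN : (8194 : ℝ) ≤ n := by exact_mod_cast hn
  have hn1 := le_eulerKappa_zero ht ht'
  rw [htn] at hn1
  have hpi := pi_sq_div_six_le
  have hs : 3 * π / √24 * √n = 3 / 2 * √(π ^ 2 / 6 * n) := by
    rw [sqrt_mul (by positivity), show π ^ 2 / 6 = (2 * π) ^ 2 / 24 by ring,
      sqrt_div (by positivity), sqrt_sq (by positivity)]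
    ring
  obtain ⟨c, hc⟩ : ∃ c, c = π ^ 2 / 6 := ⟨_, rfl⟩
  have hc1 : 1.5 ≤ c := by rw [hc]; nlinarith [pi_gt_three]
  rw [hs, ← hc]
  rw [← hc] at hpi hn1
  have h70 : 70 ≤ 1 / t := by rw [le_div_iff₀ ht]; linarith
  obtain ⟨u, hu⟩ : ∃ u, u = 1 / t := ⟨_, rfl⟩
  rw [show c / t ^ 2 - 1.35 / t = c * u ^ 2 - 1.35 * u by rw [hu]; field_simp] at hn1
  rw [show c / t = c * u by rw [hu]; field_simp]
  rw [← hu] at h70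
  have h1 : c * u - 0.7 ≤ √(c * n) := by
    refine le_sqrt_of_sq_le ?_
    nlinarith
  have h2 : u ≤ n := by nlinarith
  have h3 : √(c * n) * (1.7 / (n : ℝ) ^ 2) ≤ 0.1 := by
    have h4 : √(c * n) ≤ n := by
      rw [sqrt_le_left (by positivity)]
      nlinarith
    calc √(c * n) * (1.7 / (n : ℝ) ^ 2) ≤ (n : ℝ) * (1.7 / (n : ℝ) ^ 2) := by gcongr
      _ = (1.7 : ℝ) / n := by field_simp
      _ ≤ (1.7 : ℝ) / 8194 := by gcongr
      _ ≤ (0.1 : ℝ) := by norm_num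
  linarith

theorem nth_root_p_ratio_ineq (n : ℕ) (hn : 2 ≤ n) :
    p n ^ ((1 : ℝ) / (n : ℝ)) / p (n + 1) ^ ((1 : ℝ) / ((n : ℝ) + 1)) *
        (1 + 3 * π / (Real.sqrt 24 * (n : ℝ) ^ ((5 : ℝ) / 2))) >
      p (n - 1) ^ ((1 : ℝ) / ((n : ℝ) - 1)) / p n ^ ((1 : ℝ) / (n : ℝ)) := by
  refine nth_root_ratio_of_logDefect_lt hn ?_
  rcases lt_or_ge n 8194 with h | h
  · obtain ⟨k, g, hk, hg, htest⟩ := exists_ratioTest_of_partitionTest partitionTest_thirteen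
      (by norm_num) (by norm_num) (fun _ hm => card_partition_lt_two_pow hm) hn h
    exact logDefect_lt_of_ratioTest hn hk hg (card_partition_mono (by omega)) htest
  · exact logDefect_lt_of_large h
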